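/- arXiv:1405.1575 — 4 statements merged into one kernel-verified Lean document; each statement's English description precedes it below -/
import Mathlib

section
/- Let V be a primitive linear subspace of J3(F2) of dimension 4. Then V is equivalent to one and only one of the following four spaces of 3×3 matrices over F2, each parametrized by (a,b,c,d) ∈ F2^4: N1 = [[a,c,0],[0,a+b,d],[0,0,b]], N2 = [[a,c,d],[0,a+b,0],[0,0,b]], N3 = [[a,0,c],[0,a+b,d],[0,0,b]], N4 = [[a,c,d],[0,a+b,c],[0,0,b]]. -/
/-!
The space `J3` consists of the matrices `!![a, c, e; 0, a + b, d; 0, 0, b]`, so it has dimension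
five, and a four-dimensional subspace `V` is the kernel in `J3` of a nonzero linear form
`α a + β b + γ c + δ d + ε e` (`exists_form`).

*Existence.* If `γ = δ = ε = 0` then `V` is one of the spaces `a = 0`, `b = 0`, `a = b`. The first
has a zero column, the second a zero row, and the third has upper rank `2` but rank at most `1`
after its last column is deleted; none is primitive. Otherwise, multiplication by unitriangular
involutions on both sides adds to `c`, `d`, `e` enough multiples of the other entries to bring the
form to `e` (giving `SpaceN1`), `d` (`SpaceN2`), `c` (`SpaceN3`) or `c + d` (`SpaceN4`).

*Uniqueness.* Three properties are invariant under equivalence: `TwoThinCols` (two distinct nonzero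
`x` with `dim V x ≤ 1`), `TwoThinRows` (its transpose) and `SmallInPlane` (the `x` with
`V x ≠ K ^ 3` lie in a common plane). Only `SpaceN3` has the first, only `SpaceN2` the second, and
the third holds for `SpaceN4` but not for `SpaceN1`.
-/

open Matrix

/-- Two linear subspaces of `n × p` matrices over `K` are *equivalent* when one is obtained
from the other by multiplying on the left and on the right by fixed invertible matrices. -/
def MatEquiv (K : Type*) [Field K] {n p : ℕ}
    (V₁ V₂ : Submodule K (Matrix (Fin n) (Fin p) K)) : Prop :=
  ∃ (P : Matrix (Fin n) (Fin n) K) (Q : Matrix (Fin p) (Fin p) K),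
    IsUnit P ∧ IsUnit Q ∧
      (V₂ : Set (Matrix (Fin n) (Fin p) K)) =
        (fun M => P * M * Q) '' (V₁ : Set (Matrix (Fin n) (Fin p) K))

/-- A linear subspace of matrices is *reduced* when no nonzero vector is annihilated by every
matrix of the space, and the column spaces of the matrices of the space together span the
whole target space. -/
def Reduced (K : Type*) [Field K] {n p : ℕ}
    (V : Submodule K (Matrix (Fin n) (Fin p) K)) : Prop :=
  (∀ x : Fin p → K, (∀ M ∈ V, M.mulVec x = 0) → x = 0) ∧
  Submodule.span K {y : Fin n → K | ∃ M ∈ V, ∃ x : Fin p → K, M.mulVec x = y} = ⊤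

/-- The *upper rank* of a linear subspace of matrices: the maximal rank of a matrix in it. -/
noncomputable def urk {K : Type*} [Field K] {n p : ℕ}
    (V : Submodule K (Matrix (Fin n) (Fin p) K)) : ℕ :=
  sSup (Matrix.rank '' (V : Set (Matrix (Fin n) (Fin p) K)))

/-- The matrix obtained by deleting the last column. -/
def dropCol {K : Type*} [Field K] {n p : ℕ} (M : Matrix (Fin n) (Fin p) K) :
    Matrix (Fin n) (Fin (p - 1)) K :=
  M.submatrix id (Fin.castLE (Nat.sub_le p 1))

/-- The matrix obtained by deleting the last row. -/
def dropRow {K : Type*} [Field K] {n p : ℕ} (M : Matrix (Fin n) (Fin p) K) :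
    Matrix (Fin (n - 1)) (Fin p) K :=
  M.submatrix (Fin.castLE (Nat.sub_le n 1)) id

/-- A linear subspace of matrices (of upper rank `r = urk V`) is *semi-primitive* when it is
reduced and it is not equivalent to a subspace `T` such that the space obtained by deleting
the last column of each matrix of `T` has upper rank at most `r - 1`. -/
def SemiPrimitive (K : Type*) [Field K] {n p : ℕ}
    (V : Submodule K (Matrix (Fin n) (Fin p) K)) : Prop :=
  Reduced K V ∧
    ¬ ∃ T : Submodule K (Matrix (Fin n) (Fin p) K),
        MatEquiv K V T ∧ ∀ M ∈ T, (dropCol M).rank ≤ urk V - 1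

/-- A linear subspace of matrices (of upper rank `r = urk V`) is *primitive* when it is
semi-primitive and it is not equivalent to a subspace `T` such that the space obtained by
deleting the last row of each matrix of `T` has upper rank at most `r - 1`. -/
def Primitive (K : Type*) [Field K] {n p : ℕ}
    (V : Submodule K (Matrix (Fin n) (Fin p) K)) : Prop :=
  SemiPrimitive K V ∧
    ¬ ∃ T : Submodule K (Matrix (Fin n) (Fin p) K),
        MatEquiv K V T ∧ ∀ M ∈ T, (dropRow M).rank ≤ urk V - 1

/-- `J3(F2)`: the space of upper-triangular `3 × 3` matrices over `F2` with trace zero. -/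
def J3 : Submodule (ZMod 2) (Matrix (Fin 3) (Fin 3) (ZMod 2)) where
  carrier := {M | M.trace = 0 ∧ ∀ i j : Fin 3, j < i → M i j = 0}
  add_mem' := by
    rintro M N ⟨hM1, hM2⟩ ⟨hN1, hN2⟩
    refine ⟨by simp [Matrix.trace_add, hM1, hN1], ?_⟩
    intro i j h
    simp [Matrix.add_apply, hM2 i j h, hN2 i j h]
  zero_mem' := by
    refine ⟨by simp, ?_⟩
    intro i j h
    simp
  smul_mem' := by
    rintro c M ⟨hM1, hM2⟩
    refine ⟨by simp [Matrix.trace_smul, hM1], ?_⟩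
    intro i j h
    simp [Matrix.smul_apply, hM2 i j h]

/-- The space of matrices `!![a, c, 0; 0, a + b, d; 0, 0, b]`. -/
def SpaceN1 : Submodule (ZMod 2) (Matrix (Fin 3) (Fin 3) (ZMod 2)) where
  carrier := {M | ∃ a b c d : ZMod 2, M = !![a, c, 0; 0, a + b, d; 0, 0, b]}
  add_mem' := by
    rintro M N ⟨a, b, c, d, rfl⟩ ⟨a', b', c', d', rfl⟩
    exact ⟨a + a', b + b', c + c', d + d', by revert a b c d a' b' c' d'; decide⟩
  zero_mem' := ⟨0, 0, 0, 0, by decide⟩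
  smul_mem' := by
    rintro k M ⟨a, b, c, d, rfl⟩
    exact ⟨k * a, k * b, k * c, k * d, by revert k a b c d; decide⟩

/-- The space of matrices `!![a, c, d; 0, a + b, 0; 0, 0, b]`. -/
def SpaceN2 : Submodule (ZMod 2) (Matrix (Fin 3) (Fin 3) (ZMod 2)) where
  carrier := {M | ∃ a b c d : ZMod 2, M = !![a, c, d; 0, a + b, 0; 0, 0, b]}
  add_mem' := by
    rintro M N ⟨a, b, c, d, rfl⟩ ⟨a', b', c', d', rfl⟩
    exact ⟨a + a', b + b', c + c', d + d', by revert a b c d a' b' c' d'; decide⟩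
  zero_mem' := ⟨0, 0, 0, 0, by decide⟩
  smul_mem' := by
    rintro k M ⟨a, b, c, d, rfl⟩
    exact ⟨k * a, k * b, k * c, k * d, by revert k a b c d; decide⟩

/-- The space of matrices `!![a, 0, c; 0, a + b, d; 0, 0, b]`. -/
def SpaceN3 : Submodule (ZMod 2) (Matrix (Fin 3) (Fin 3) (ZMod 2)) where
  carrier := {M | ∃ a b c d : ZMod 2, M = !![a, 0, c; 0, a + b, d; 0, 0, b]}
  add_mem' := by
    rintro M N ⟨a, b, c, d, rfl⟩ ⟨a', b', c', d', rfl⟩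
    exact ⟨a + a', b + b', c + c', d + d', by revert a b c d a' b' c' d'; decide⟩
  zero_mem' := ⟨0, 0, 0, 0, by decide⟩
  smul_mem' := by
    rintro k M ⟨a, b, c, d, rfl⟩
    exact ⟨k * a, k * b, k * c, k * d, by revert k a b c d; decide⟩

/-- The space of matrices `!![a, c, d; 0, a + b, c; 0, 0, b]`. -/
def SpaceN4 : Submodule (ZMod 2) (Matrix (Fin 3) (Fin 3) (ZMod 2)) where
  carrier := {M | ∃ a b c d : ZMod 2, M = !![a, c, d; 0, a + b, c; 0, 0, b]}
  add_mem' := by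
    rintro M N ⟨a, b, c, d, rfl⟩ ⟨a', b', c', d', rfl⟩
    exact ⟨a + a', b + b', c + c', d + d', by revert a b c d a' b' c' d'; decide⟩
  zero_mem' := ⟨0, 0, 0, 0, by decide⟩
  smul_mem' := by
    rintro k M ⟨a, b, c, d, rfl⟩
    exact ⟨k * a, k * b, k * c, k * d, by revert k a b c d; decide⟩

/-- Exactly one of four conditions holds. -/
def ExactlyOne4 (c₁ c₂ c₃ c₄ : Prop) : Prop :=
  (c₁ ∧ ¬c₂ ∧ ¬c₃ ∧ ¬c₄) ∨ (¬c₁ ∧ c₂ ∧ ¬c₃ ∧ ¬c₄) ∨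
  (¬c₁ ∧ ¬c₂ ∧ c₃ ∧ ¬c₄) ∨ (¬c₁ ∧ ¬c₂ ∧ ¬c₃ ∧ c₄)

/-- The general matrix of `J3`. -/
def jmat (a b c d e : ZMod 2) : Matrix (Fin 3) (Fin 3) (ZMod 2) :=
  !![a, c, e; 0, a + b, d; 0, 0, b]

/-- `V` is the hyperplane of `J3` with equation `α a + β b + γ c + δ d + ε e = 0`. -/
def IsKer (V : Submodule (ZMod 2) (Matrix (Fin 3) (Fin 3) (ZMod 2)))
    (α β γ δ ε : ZMod 2) : Prop :=
  ∀ M, M ∈ V ↔ ∃ a b c d e, M = jmat a b c d e ∧ α * a + β * b + γ * c + δ * d + ε * e = 0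

/-! ### Hyperplanes of `J3` -/

/-- The parametrization of `J3` as a linear map. -/
def jlin : (Fin 5 → ZMod 2) →ₗ[ZMod 2] Matrix (Fin 3) (Fin 3) (ZMod 2) where
  toFun v := jmat (v 0) (v 1) (v 2) (v 3) (v 4)
  map_add' v w := by
    ext i j
    fin_cases i <;> fin_cases j <;> simp [jmat] <;> ring
  map_smul' k v := by
    ext i j
    fin_cases i <;> fin_cases j <;> simp [jmat] <;> ring

lemma jlin_injective : Function.Injective jlin := by
  intro v w h
  have h' : ∀ i j, jlin v i j = jlin w i j := fun i j => by rw [h]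
  have h0 := h' 0 0
  have h1 := h' 2 2
  have h2 := h' 0 1
  have h3 := h' 1 2
  have h4 := h' 0 2
  simp [jlin, jmat] at h0 h1 h2 h3 h4
  ext i
  fin_cases i <;> simp [h0, h1, h2, h3, h4]

lemma mem_J3_iff (M : Matrix (Fin 3) (Fin 3) (ZMod 2)) :
    M ∈ J3 ↔ ∃ a b c d e, M = jmat a b c d e := by
  constructor
  · rintro ⟨htr, hlow⟩
    refine ⟨M 0 0, M 2 2, M 0 1, M 1 2, M 0 2, ?_⟩
    have h11 : M 1 1 = M 0 0 + M 2 2 := by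
      rw [Matrix.trace_fin_three] at htr
      generalize M 0 0 = x at *
      generalize M 1 1 = y at *
      generalize M 2 2 = z at *
      revert x y z
      decide
    have h10 := hlow 1 0 (by decide)
    have h20 := hlow 2 0 (by decide)
    have h21 := hlow 2 1 (by decide)
    ext i j
    fin_cases i <;> fin_cases j <;> simp [jmat, h11, h10, h20, h21]
  · rintro ⟨a, b, c, d, e, rfl⟩
    constructor
    · rw [Matrix.trace_fin_three]
      simp only [jmat]
      revert a b
      simp
      decide
    · intro i j h
      fin_cases i <;> fin_cases j <;> simp_all [jmat]

lemma range_jlin : LinearMap.range jlin = J3 := by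
  ext M
  rw [mem_J3_iff]
  constructor
  · rintro ⟨v, rfl⟩
    exact ⟨_, _, _, _, _, rfl⟩
  · rintro ⟨a, b, c, d, e, rfl⟩
    exact ⟨![a, b, c, d, e], by simp [jlin]⟩

lemma finrank_J3 : Module.finrank (ZMod 2) J3 = 5 := by
  rw [← range_jlin, LinearMap.finrank_range_of_inj jlin_injective]
  simp

lemma exists_form (V : Submodule (ZMod 2) (Matrix (Fin 3) (Fin 3) (ZMod 2)))
    (hV : V ≤ J3) (hdim : Module.finrank (ZMod 2) V = 4) :
    ∃ α β γ δ ε, IsKer V α β γ δ ε ∧ ¬ (α = 0 ∧ β = 0 ∧ γ = 0 ∧ δ = 0 ∧ ε = 0) := by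
  obtain ⟨x, hx, hxV⟩ : ∃ x ∈ J3, x ∉ V := by
    by_contra! h
    have := Submodule.finrank_mono (show J3 ≤ V from h)
    rw [finrank_J3, hdim] at this
    omega
  obtain ⟨f, hfx, hfV⟩ := Submodule.exists_le_ker_of_notMem hxV
  have hlt : J3 ⊓ LinearMap.ker f < J3 :=
    lt_of_le_of_ne inf_le_left fun h => hfx (LinearMap.mem_ker.1 (inf_eq_left.1 h hx))
  have hcard := Submodule.finrank_lt_finrank_of_lt hlt
  rw [finrank_J3] at hcard
  have hEq : V = J3 ⊓ LinearMap.ker f :=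
    Submodule.eq_of_le_of_finrank_le (le_inf hV hfV) (by omega)
  have hf : ∀ a b c d e, f (jmat a b c d e) =
      f (jmat 1 0 0 0 0) * a + f (jmat 0 1 0 0 0) * b + f (jmat 0 0 1 0 0) * c +
        f (jmat 0 0 0 1 0) * d + f (jmat 0 0 0 0 1) * e := by
    intro a b c d e
    have : jmat a b c d e = a • jmat 1 0 0 0 0 + b • jmat 0 1 0 0 0 + c • jmat 0 0 1 0 0 +
        d • jmat 0 0 0 1 0 + e • jmat 0 0 0 0 1 := by
      ext i j
      fin_cases i <;> fin_cases j <;> simp [jmat]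
    rw [this]
    simp only [map_add, map_smul, smul_eq_mul]
    ring
  refine ⟨f (jmat 1 0 0 0 0), f (jmat 0 1 0 0 0), f (jmat 0 0 1 0 0), f (jmat 0 0 0 1 0),
    f (jmat 0 0 0 0 1), fun M => ?_, fun h0 => ?_⟩
  · rw [hEq, Submodule.mem_inf, mem_J3_iff, LinearMap.mem_ker]
    constructor
    · rintro ⟨⟨a, b, c, d, e, rfl⟩, h⟩
      exact ⟨a, b, c, d, e, rfl, by rw [← hf, h]⟩
    · rintro ⟨a, b, c, d, e, rfl, h⟩
      exact ⟨⟨a, b, c, d, e, rfl⟩, by rw [hf, h]⟩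
  · obtain ⟨h1, h2, h3, h4, h5⟩ := h0
    obtain ⟨a, b, c, d, e, rfl⟩ := (mem_J3_iff x).1 hx
    exact hfx (by rw [hf, h1, h2, h3, h4, h5]; ring)

lemma isKer_N1 : IsKer SpaceN1 0 0 0 0 1 := by
  intro M
  constructor
  · rintro ⟨a, b, c, d, rfl⟩
    exact ⟨a, b, c, d, 0, rfl, by simp⟩
  · rintro ⟨a, b, c, d, e, rfl, h⟩
    obtain rfl : e = 0 := by simpa using h
    exact ⟨a, b, c, d, rfl⟩

lemma isKer_N2 : IsKer SpaceN2 0 0 0 1 0 := by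
  intro M
  constructor
  · rintro ⟨a, b, c, d, rfl⟩
    exact ⟨a, b, c, 0, d, rfl, by simp⟩
  · rintro ⟨a, b, c, d, e, rfl, h⟩
    obtain rfl : d = 0 := by simpa using h
    exact ⟨a, b, c, e, rfl⟩

lemma isKer_N3 : IsKer SpaceN3 0 0 1 0 0 := by
  intro M
  constructor
  · rintro ⟨a, b, c, d, rfl⟩
    exact ⟨a, b, 0, d, c, rfl, by simp⟩
  · rintro ⟨a, b, c, d, e, rfl, h⟩
    obtain rfl : c = 0 := by simpa using h
    exact ⟨a, b, e, d, rfl⟩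

lemma isKer_N4 : IsKer SpaceN4 0 0 1 1 0 := by
  intro M
  constructor
  · rintro ⟨a, b, c, d, rfl⟩
    exact ⟨a, b, c, c, d, rfl, by simp [CharTwo.add_self_eq_zero]⟩
  · rintro ⟨a, b, c, d, e, rfl, h⟩
    obtain rfl : c = d := by simpa [CharTwo.add_eq_zero] using h
    exact ⟨a, b, c, e, rfl⟩

/-! ### Reduction to the four normal forms -/

/-- Involutions `P`, `Q` give an equivalence as soon as `M ↦ P * M * Q` maps each space into the
other. -/
lemma matEquiv_of_involutions {V W : Submodule (ZMod 2) (Matrix (Fin 3) (Fin 3) (ZMod 2))}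
    (P Q : Matrix (Fin 3) (Fin 3) (ZMod 2)) (hP : P * P = 1) (hQ : Q * Q = 1)
    (hVW : ∀ M ∈ V, P * M * Q ∈ W) (hWV : ∀ M ∈ W, P * M * Q ∈ V) :
    MatEquiv (ZMod 2) V W := by
  refine ⟨P, Q, IsUnit.of_mul_eq_one _ hP, IsUnit.of_mul_eq_one _ hQ, ?_⟩
  ext M
  constructor
  · intro hM
    refine ⟨P * M * Q, hWV M hM, ?_⟩
    calc P * (P * M * Q) * Q = (P * P) * M * (Q * Q) := by simp only [Matrix.mul_assoc]
      _ = M := by simp [hP, hQ]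
  · rintro ⟨N, hN, rfl⟩
    exact hVW N hN

/-- Upper unitriangular changes of basis act on the parameters of `jmat` by translating `c`, `d`
and `e`. -/
lemma unitri_mul_jmat (p q r s t u a b c d e : ZMod 2) :
    !![1, p, t; 0, 1, r; 0, 0, 1] * jmat a b c d e * !![1, u, s; 0, 1, q; 0, 0, 1] =
      jmat a b (c + p * (a + b) + u * a) (d + q * (a + b) + r * b)
        (e + s * a + q * c + p * q * (a + b) + p * d + t * b) := by
  ext i j
  fin_cases i <;> fin_cases j <;>
    simp [jmat, Matrix.mul_apply, Fin.sum_univ_three] <;> ring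

lemma unitri_sq (p q s : ZMod 2) (h : p * q = 0) :
    !![1, p, s; 0, 1, q; 0, 0, 1] * !![1, p, s; 0, 1, q; 0, 0, 1] = 1 := by
  revert p q s
  decide

lemma matEquiv_of_isKer {V W : Submodule (ZMod 2) (Matrix (Fin 3) (Fin 3) (ZMod 2))}
    {α β γ δ ε α' β' γ' δ' ε' : ZMod 2} (hV : IsKer V α β γ δ ε) (hW : IsKer W α' β' γ' δ' ε')
    (p q r s t u : ZMod 2) (hP : p * r = 0) (hQ : u * q = 0)
    (h : ∀ a b c d e : ZMod 2,
      α' * a + β' * b + γ' * (c + p * (a + b) + u * a) + δ' * (d + q * (a + b) + r * b) +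
        ε' * (e + s * a + q * c + p * q * (a + b) + p * d + t * b) =
      α * a + β * b + γ * c + δ * d + ε * e)
    (h' : ∀ a b c d e : ZMod 2,
      α * a + β * b + γ * (c + p * (a + b) + u * a) + δ * (d + q * (a + b) + r * b) +
        ε * (e + s * a + q * c + p * q * (a + b) + p * d + t * b) =
      α' * a + β' * b + γ' * c + δ' * d + ε' * e) :
    MatEquiv (ZMod 2) V W := by
  refine matEquiv_of_involutions !![1, p, t; 0, 1, r; 0, 0, 1] !![1, u, s; 0, 1, q; 0, 0, 1]
    (unitri_sq _ _ _ hP) (unitri_sq _ _ _ hQ) ?_ ?_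
  · intro M hM
    obtain ⟨a, b, c, d, e, rfl, h0⟩ := (hV M).1 hM
    exact (hW _).2 ⟨_, _, _, _, _, unitri_mul_jmat .., by rw [h, h0]⟩
  · intro M hM
    obtain ⟨a, b, c, d, e, rfl, h0⟩ := (hW M).1 hM
    exact (hV _).2 ⟨_, _, _, _, _, unitri_mul_jmat .., by rw [h', h0]⟩

/-! ### The non-primitive hyperplanes -/

lemma MatEquiv.rfl' (V : Submodule (ZMod 2) (Matrix (Fin 3) (Fin 3) (ZMod 2))) :
    MatEquiv (ZMod 2) V V :=
  ⟨1, 1, isUnit_one, isUnit_one, by simp⟩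

/-- The hyperplane `a = 0` has zero first column. -/
lemma not_primitive_a {V : Submodule (ZMod 2) (Matrix (Fin 3) (Fin 3) (ZMod 2))}
    (hV : IsKer V 1 0 0 0 0) : ¬ Primitive (ZMod 2) V := by
  intro h
  have := h.1.1.1 ![1, 0, 0] (by
    intro M hM
    obtain ⟨a, b, c, d, e, rfl, h⟩ := (hV M).1 hM
    obtain rfl : a = 0 := by simpa using h
    ext i
    fin_cases i <;> simp [jmat, Matrix.mulVec, dotProduct, Fin.sum_univ_three])
  simpa using congrFun this 0

/-- The hyperplane `b = 0` has zero last row. -/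
lemma not_primitive_b {V : Submodule (ZMod 2) (Matrix (Fin 3) (Fin 3) (ZMod 2))}
    (hV : IsKer V 0 1 0 0 0) : ¬ Primitive (ZMod 2) V := by
  intro h
  have hle : (⊤ : Submodule (ZMod 2) (Fin 3 → ZMod 2)) ≤
      LinearMap.ker (LinearMap.proj (R := ZMod 2) (φ := fun _ : Fin 3 => ZMod 2) 2) := by
    rw [← h.1.1.2, Submodule.span_le]
    rintro y ⟨M, hM, x, rfl⟩
    obtain ⟨a, b, c, d, e, rfl, h⟩ := (hV M).1 hM
    obtain rfl : b = 0 := by simpa using h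
    simp [jmat, dotProduct, Fin.sum_univ_three]
  have := hle (show (fun _ => 1) ∈ ⊤ from trivial)
  simp at this

/-- The hyperplane `a = b` has upper rank at least `2`, and rank at most `1` without its last
column. -/
lemma not_primitive_ab {V : Submodule (ZMod 2) (Matrix (Fin 3) (Fin 3) (ZMod 2))}
    (hV : IsKer V 1 1 0 0 0) : ¬ Primitive (ZMod 2) V := by
  intro h
  refine h.1.2 ⟨V, MatEquiv.rfl' V, ?_⟩
  have hmem : jmat 0 0 1 1 0 ∈ V := (hV _).2 ⟨_, _, _, _, _, rfl, by simp⟩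
  have hrk : 2 ≤ (jmat 0 0 1 1 0).rank := by
    -- Rows `0, 1` and columns `1, 2` form an identity block.
    have hblock : (!![1, 0, 0; 0, 1, 0] : Matrix (Fin 2) (Fin 3) (ZMod 2)) *
        jmat 0 0 1 1 0 * (!![0, 0; 1, 0; 0, 1] : Matrix (Fin 3) (Fin 2) (ZMod 2)) = 1 := by
      decide
    have h2 : (1 : Matrix (Fin 2) (Fin 2) (ZMod 2)).rank = 2 := by simp
    refine h2.symm.le.trans ?_
    rw [← hblock]
    exact (Matrix.rank_mul_le_left _ _).trans (Matrix.rank_mul_le_right _ _)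
  have hurk : 2 ≤ urk V := by
    refine hrk.trans (le_csSup ⟨3, ?_⟩ ⟨_, hmem, rfl⟩)
    rintro _ ⟨M, -, rfl⟩
    simpa using M.rank_le_card_width
  intro M hM
  obtain ⟨a, b, c, d, e, rfl, h⟩ := (hV M).1 hM
  obtain rfl : a = b := by simpa [CharTwo.add_eq_zero] using h
  have : dropCol (jmat a a c d e) = Matrix.vecMulVec ![1, 0, 0] ![a, c] := by
    ext i j
    fin_cases i <;> fin_cases j <;>
      simp [dropCol, jmat, Matrix.vecMulVec_apply, CharTwo.add_self_eq_zero]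
  rw [this]
  exact (Matrix.rank_vecMulVec_le _ _).trans (by omega)

lemma exists_equiv (V : Submodule (ZMod 2) (Matrix (Fin 3) (Fin 3) (ZMod 2)))
    (hV : V ≤ J3) (hprim : Primitive (ZMod 2) V) (hdim : Module.finrank (ZMod 2) V = 4) :
    MatEquiv (ZMod 2) V SpaceN1 ∨ MatEquiv (ZMod 2) V SpaceN2 ∨
      MatEquiv (ZMod 2) V SpaceN3 ∨ MatEquiv (ZMod 2) V SpaceN4 := by
  obtain ⟨α, β, γ, δ, ε, hK, hne⟩ := exists_form V hV hdim
  have h01 : ∀ x : ZMod 2, x = 0 ∨ x = 1 := by decide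
  rcases h01 ε with rfl | rfl
  · rcases h01 γ with rfl | rfl <;> rcases h01 δ with rfl | rfl
    · exfalso
      rcases h01 α with rfl | rfl <;> rcases h01 β with rfl | rfl
      · simp at hne
      · exact not_primitive_b hK hprim
      · exact not_primitive_a hK hprim
      · exact not_primitive_ab hK hprim
    · refine Or.inr (Or.inl (matEquiv_of_isKer hK isKer_N2 0 α (α + β) 0 0 0 ?_ ?_ ?_ ?_)) <;>
        clear hK hne <;> revert α β <;> decide
    · refine Or.inr (Or.inr (Or.inl
        (matEquiv_of_isKer hK isKer_N3 β 0 0 0 0 (α + β) ?_ ?_ ?_ ?_))) <;>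
        clear hK hne <;> revert α β <;> decide
    · refine Or.inr (Or.inr (Or.inr
        (matEquiv_of_isKer hK isKer_N4 β 0 0 0 0 (α + β) ?_ ?_ ?_ ?_))) <;>
        clear hK hne <;> revert α β <;> decide
  · refine Or.inl
      (matEquiv_of_isKer hK isKer_N1 δ γ 0 (α + δ * γ) (β + δ * γ) 0 ?_ ?_ ?_ ?_)
    · simp
    · simp
    · intro a b c d e
      linear_combination (a + b) * δ * γ * (CharTwo.two_eq_zero : (2 : ZMod 2) = 0)
    · intro a b c d e
      linear_combination (a * (α + 2 * δ * γ) + b * (β + 2 * δ * γ) + c * γ + d * δ) *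
        (CharTwo.two_eq_zero : (2 : ZMod 2) = 0)

/-! ### Invariants -/

/-- There are two distinct nonzero vectors `x` for which `V x` has dimension at most one, that is,
is contained in some `{0, y}`. -/
def TwoThinCols (V : Submodule (ZMod 2) (Matrix (Fin 3) (Fin 3) (ZMod 2))) : Prop :=
  ∃ x x' y y' : Fin 3 → ZMod 2, x ≠ 0 ∧ x' ≠ 0 ∧ x ≠ x' ∧
    ∀ M ∈ V, (M *ᵥ x = 0 ∨ M *ᵥ x = y) ∧ (M *ᵥ x' = 0 ∨ M *ᵥ x' = y')

/-- The transpose of `TwoThinCols`. -/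
def TwoThinRows (V : Submodule (ZMod 2) (Matrix (Fin 3) (Fin 3) (ZMod 2))) : Prop :=
  ∃ x x' y y' : Fin 3 → ZMod 2, x ≠ 0 ∧ x' ≠ 0 ∧ x ≠ x' ∧
    ∀ M ∈ V, (x ᵥ* M = 0 ∨ x ᵥ* M = y) ∧ (x' ᵥ* M = 0 ∨ x' ᵥ* M = y')

/-- The vectors `x` for which `V x` is contained in a plane (with equation `w`) all lie in one
plane (with equation `u`). -/
def SmallInPlane (V : Submodule (ZMod 2) (Matrix (Fin 3) (Fin 3) (ZMod 2))) : Prop :=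
  ∃ u : Fin 3 → ZMod 2, u ≠ 0 ∧ ∀ x w : Fin 3 → ZMod 2, w ≠ 0 →
    (∀ M ∈ V, w ⬝ᵥ (M *ᵥ x) = 0) → u ⬝ᵥ x = 0

/-- An equivalence written with explicit inverses, symmetrically in both spaces. -/
lemma MatEquiv.unpack {V W : Submodule (ZMod 2) (Matrix (Fin 3) (Fin 3) (ZMod 2))}
    (h : MatEquiv (ZMod 2) V W) :
    ∃ P P' Q Q' : Matrix (Fin 3) (Fin 3) (ZMod 2), P * P' = 1 ∧ P' * P = 1 ∧ Q * Q' = 1 ∧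
      Q' * Q = 1 ∧ (∀ M ∈ V, P * M * Q ∈ W) ∧ (∀ M ∈ W, P' * M * Q' ∈ V) := by
  obtain ⟨P, Q, ⟨P, rfl⟩, ⟨Q, rfl⟩, h⟩ := h
  refine ⟨P, ↑P⁻¹, Q, ↑Q⁻¹, by simp, by simp, by simp, by simp, fun M hM => ?_, fun M hM => ?_⟩
  · rw [← SetLike.mem_coe, h]
    exact ⟨M, hM, rfl⟩
  · rw [← SetLike.mem_coe, h] at hM
    obtain ⟨N, hN, rfl⟩ := hM
    have : (↑P⁻¹ : Matrix (Fin 3) (Fin 3) (ZMod 2)) *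
        ((P : Matrix (Fin 3) (Fin 3) (ZMod 2)) * N * (Q : Matrix (Fin 3) (Fin 3) (ZMod 2))) *
        (↑Q⁻¹ : Matrix (Fin 3) (Fin 3) (ZMod 2)) = N := by
      rw [Matrix.mul_assoc, Matrix.mul_assoc, Units.mul_inv, Matrix.mul_one, ← Matrix.mul_assoc,
        Units.inv_mul, Matrix.one_mul]
    simpa only [this, SetLike.mem_coe] using hN

lemma MatEquiv.symm' {V W : Submodule (ZMod 2) (Matrix (Fin 3) (Fin 3) (ZMod 2))}
    (h : MatEquiv (ZMod 2) V W) : MatEquiv (ZMod 2) W V := by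
  obtain ⟨P, P', Q, Q', h1, h2, h3, h4, hVW, hWV⟩ := h.unpack
  refine ⟨P', Q', IsUnit.of_mul_eq_one _ h2, IsUnit.of_mul_eq_one _ h4, ?_⟩
  ext M
  constructor
  · intro hM
    refine ⟨P * M * Q, hVW M hM, ?_⟩
    calc P' * (P * M * Q) * Q' = (P' * P) * M * (Q * Q') := by simp only [Matrix.mul_assoc]
      _ = M := by simp [h2, h3]
  · rintro ⟨N, hN, rfl⟩
    exact hWV N hN

lemma mulVec_inj {A B : Matrix (Fin 3) (Fin 3) (ZMod 2)} (h : B * A = 1)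
    {x y : Fin 3 → ZMod 2} (hxy : A *ᵥ x = A *ᵥ y) : x = y := by
  have := congrArg (B *ᵥ ·) hxy
  simpa [Matrix.mulVec_mulVec, h] using this

lemma vecMul_inj {A B : Matrix (Fin 3) (Fin 3) (ZMod 2)} (h : A * B = 1)
    {x y : Fin 3 → ZMod 2} (hxy : x ᵥ* A = y ᵥ* A) : x = y := by
  have := congrArg (· ᵥ* B) hxy
  simpa [Matrix.vecMul_vecMul, h] using this

lemma TwoThinCols.of_equiv {V W : Submodule (ZMod 2) (Matrix (Fin 3) (Fin 3) (ZMod 2))}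
    (h : MatEquiv (ZMod 2) V W) (hV : TwoThinCols V) : TwoThinCols W := by
  obtain ⟨P, P', Q, Q', h1, h2, h3, h4, hVW, hWV⟩ := h.unpack
  obtain ⟨x, x', y, y', hx, hx', hne, hM⟩ := hV
  have key : ∀ (M : Matrix (Fin 3) (Fin 3) (ZMod 2)) (z : Fin 3 → ZMod 2),
      M *ᵥ (Q' *ᵥ z) = P *ᵥ ((P' * M * Q') *ᵥ z) := by
    intro M z
    simp only [Matrix.mulVec_mulVec, ← Matrix.mul_assoc, h1, Matrix.one_mul]
  refine ⟨Q' *ᵥ x, Q' *ᵥ x', P *ᵥ y, P *ᵥ y', fun h0 => hx (mulVec_inj h3 (by simpa using h0)),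
    fun h0 => hx' (mulVec_inj h3 (by simpa using h0)), fun h0 => hne (mulVec_inj h3 h0),
    fun M hMW => ?_⟩
  rw [key, key]
  obtain ⟨ha, hb⟩ := hM _ (hWV M hMW)
  exact ⟨ha.imp (fun h => by rw [h, Matrix.mulVec_zero]) (fun h => by rw [h]),
    hb.imp (fun h => by rw [h, Matrix.mulVec_zero]) (fun h => by rw [h])⟩

lemma TwoThinRows.of_equiv {V W : Submodule (ZMod 2) (Matrix (Fin 3) (Fin 3) (ZMod 2))}
    (h : MatEquiv (ZMod 2) V W) (hV : TwoThinRows V) : TwoThinRows W := by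
  obtain ⟨P, P', Q, Q', h1, h2, h3, h4, hVW, hWV⟩ := h.unpack
  obtain ⟨x, x', y, y', hx, hx', hne, hM⟩ := hV
  have key : ∀ (M : Matrix (Fin 3) (Fin 3) (ZMod 2)) (z : Fin 3 → ZMod 2),
      (z ᵥ* P') ᵥ* M = (z ᵥ* (P' * M * Q')) ᵥ* Q := by
    intro M z
    simp only [Matrix.vecMul_vecMul, Matrix.mul_assoc, h4, Matrix.mul_one]
  refine ⟨x ᵥ* P', x' ᵥ* P', y ᵥ* Q, y' ᵥ* Q, fun h0 => hx (vecMul_inj h2 (by simpa using h0)),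
    fun h0 => hx' (vecMul_inj h2 (by simpa using h0)), fun h0 => hne (vecMul_inj h2 h0),
    fun M hMW => ?_⟩
  rw [key, key]
  obtain ⟨ha, hb⟩ := hM _ (hWV M hMW)
  exact ⟨ha.imp (fun h => by rw [h, Matrix.zero_vecMul]) (fun h => by rw [h]),
    hb.imp (fun h => by rw [h, Matrix.zero_vecMul]) (fun h => by rw [h])⟩

lemma SmallInPlane.of_equiv {V W : Submodule (ZMod 2) (Matrix (Fin 3) (Fin 3) (ZMod 2))}
    (h : MatEquiv (ZMod 2) V W) (hV : SmallInPlane V) : SmallInPlane W := by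
  obtain ⟨P, P', Q, Q', h1, h2, h3, h4, hVW, hWV⟩ := h.unpack
  obtain ⟨u, hu, hM⟩ := hV
  refine ⟨u ᵥ* Q, fun h0 => hu (vecMul_inj h3 (by simpa using h0)), fun x w hw hx => ?_⟩
  rw [← Matrix.dotProduct_mulVec]
  refine hM (Q *ᵥ x) (w ᵥ* P) (fun h0 => hw (vecMul_inj h1 (by simpa using h0)))
    fun M hMV => ?_
  rw [← hx _ (hVW M hMV), ← Matrix.dotProduct_mulVec, Matrix.mulVec_mulVec, Matrix.mulVec_mulVec,
    Matrix.mul_assoc]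

/-! ### The invariants of the four spaces -/

/-- If at most one nonzero vector `x` has `dim V x ≤ 1`, then `TwoThinCols` fails. -/
lemma not_twoThinCols {V : Submodule (ZMod 2) (Matrix (Fin 3) (Fin 3) (ZMod 2))}
    (z : Fin 3 → ZMod 2)
    (h : ∀ x y : Fin 3 → ZMod 2, (∀ M ∈ V, M *ᵥ x = 0 ∨ M *ᵥ x = y) → x = 0 ∨ x = z) :
    ¬ TwoThinCols V := by
  rintro ⟨x, x', y, y', hx, hx', hne, hM⟩
  have h1 := (h x y fun M hMV => (hM M hMV).1).resolve_left hx
  have h2 := (h x' y' fun M hMV => (hM M hMV).2).resolve_left hx'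
  exact hne (h1.trans h2.symm)

lemma not_twoThinRows {V : Submodule (ZMod 2) (Matrix (Fin 3) (Fin 3) (ZMod 2))}
    (z : Fin 3 → ZMod 2)
    (h : ∀ x y : Fin 3 → ZMod 2, (∀ M ∈ V, x ᵥ* M = 0 ∨ x ᵥ* M = y) → x = 0 ∨ x = z) :
    ¬ TwoThinRows V := by
  rintro ⟨x, x', y, y', hx, hx', hne, hM⟩
  have h1 := (h x y fun M hMV => (hM M hMV).1).resolve_left hx
  have h2 := (h x' y' fun M hMV => (hM M hMV).2).resolve_left hx'
  exact hne (h1.trans h2.symm)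

lemma not_twoThinCols_N1 : ¬ TwoThinCols SpaceN1 := by
  refine not_twoThinCols ![1, 0, 0] fun x y h => ?_
  have h' : ∀ a b c d : ZMod 2, !![a, c, 0; 0, a + b, d; 0, 0, b] *ᵥ x = 0 ∨
      !![a, c, 0; 0, a + b, d; 0, 0, b] *ᵥ x = y := fun a b c d => h _ ⟨a, b, c, d, rfl⟩
  clear h
  revert x y
  decide

lemma not_twoThinCols_N2 : ¬ TwoThinCols SpaceN2 := by
  refine not_twoThinCols ![1, 0, 0] fun x y h => ?_
  have h' : ∀ a b c d : ZMod 2, !![a, c, d; 0, a + b, 0; 0, 0, b] *ᵥ x = 0 ∨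
      !![a, c, d; 0, a + b, 0; 0, 0, b] *ᵥ x = y := fun a b c d => h _ ⟨a, b, c, d, rfl⟩
  clear h
  revert x y
  decide

lemma not_twoThinCols_N4 : ¬ TwoThinCols SpaceN4 := by
  refine not_twoThinCols ![1, 0, 0] fun x y h => ?_
  have h' : ∀ a b c d : ZMod 2, !![a, c, d; 0, a + b, c; 0, 0, b] *ᵥ x = 0 ∨
      !![a, c, d; 0, a + b, c; 0, 0, b] *ᵥ x = y := fun a b c d => h _ ⟨a, b, c, d, rfl⟩
  clear h
  revert x y
  decide

lemma not_twoThinRows_N1 : ¬ TwoThinRows SpaceN1 := by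
  refine not_twoThinRows ![0, 0, 1] fun x y h => ?_
  have h' : ∀ a b c d : ZMod 2, x ᵥ* !![a, c, 0; 0, a + b, d; 0, 0, b] = 0 ∨
      x ᵥ* !![a, c, 0; 0, a + b, d; 0, 0, b] = y := fun a b c d => h _ ⟨a, b, c, d, rfl⟩
  clear h
  revert x y
  decide

lemma not_twoThinRows_N4 : ¬ TwoThinRows SpaceN4 := by
  refine not_twoThinRows ![0, 0, 1] fun x y h => ?_
  have h' : ∀ a b c d : ZMod 2, x ᵥ* !![a, c, d; 0, a + b, c; 0, 0, b] = 0 ∨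
      x ᵥ* !![a, c, d; 0, a + b, c; 0, 0, b] = y := fun a b c d => h _ ⟨a, b, c, d, rfl⟩
  clear h
  revert x y
  decide

lemma twoThinCols_N3 : TwoThinCols SpaceN3 := by
  refine ⟨![1, 0, 0], ![0, 1, 0], ![1, 0, 0], ![0, 1, 0], by decide, by decide, by decide, ?_⟩
  rintro _ ⟨a, b, c, d, rfl⟩
  revert a b c d
  decide

lemma twoThinRows_N2 : TwoThinRows SpaceN2 := by
  refine ⟨![0, 1, 0], ![0, 0, 1], ![0, 1, 0], ![0, 0, 1], by decide, by decide, by decide, ?_⟩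
  rintro _ ⟨a, b, c, d, rfl⟩
  revert a b c d
  decide

lemma smallInPlane_N4 : SmallInPlane SpaceN4 := by
  refine ⟨![0, 0, 1], by decide, fun x w hw h => ?_⟩
  have h' : ∀ a b c d : ZMod 2, w ⬝ᵥ (!![a, c, d; 0, a + b, c; 0, 0, b] *ᵥ x) = 0 :=
    fun a b c d => h _ ⟨a, b, c, d, rfl⟩
  clear h
  revert x w
  decide

/-- Each basis vector `x` has `V x` contained in a coordinate plane. -/
lemma not_smallInPlane_N1 : ¬ SmallInPlane SpaceN1 := by
  rintro ⟨u, hu, h⟩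
  have h0 := h ![1, 0, 0] ![0, 0, 1] (by decide) (by
    rintro _ ⟨a, b, c, d, rfl⟩
    revert a b c d
    decide)
  have h1 := h ![0, 1, 0] ![0, 0, 1] (by decide) (by
    rintro _ ⟨a, b, c, d, rfl⟩
    revert a b c d
    decide)
  have h2 := h ![0, 0, 1] ![1, 0, 0] (by decide) (by
    rintro _ ⟨a, b, c, d, rfl⟩
    revert a b c d
    decide)
  clear h
  revert u
  decide

theorem primitive_four_dimensional_subspace_of_J3
    (V : Submodule (ZMod 2) (Matrix (Fin 3) (Fin 3) (ZMod 2)))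
    (hV : V ≤ J3) (hprim : Primitive (ZMod 2) V)
    (hdim : Module.finrank (ZMod 2) V = 4) :
    ExactlyOne4 (MatEquiv (ZMod 2) V SpaceN1) (MatEquiv (ZMod 2) V SpaceN2)
      (MatEquiv (ZMod 2) V SpaceN3) (MatEquiv (ZMod 2) V SpaceN4) := by
  have hA : ∀ {W}, MatEquiv (ZMod 2) V W → (TwoThinCols V ↔ TwoThinCols W) :=
    fun h => ⟨.of_equiv h, .of_equiv h.symm'⟩
  have hB : ∀ {W}, MatEquiv (ZMod 2) V W → (TwoThinRows V ↔ TwoThinRows W) :=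
    fun h => ⟨.of_equiv h, .of_equiv h.symm'⟩
  have hC : ∀ {W}, MatEquiv (ZMod 2) V W → (SmallInPlane V ↔ SmallInPlane W) :=
    fun h => ⟨.of_equiv h, .of_equiv h.symm'⟩
  have n12 : MatEquiv (ZMod 2) V SpaceN1 → ¬ MatEquiv (ZMod 2) V SpaceN2 := fun h h' =>
    not_twoThinRows_N1 ((hB h).1 ((hB h').2 twoThinRows_N2))
  have n13 : MatEquiv (ZMod 2) V SpaceN1 → ¬ MatEquiv (ZMod 2) V SpaceN3 := fun h h' =>
    not_twoThinCols_N1 ((hA h).1 ((hA h').2 twoThinCols_N3))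
  have n14 : MatEquiv (ZMod 2) V SpaceN1 → ¬ MatEquiv (ZMod 2) V SpaceN4 := fun h h' =>
    not_smallInPlane_N1 ((hC h).1 ((hC h').2 smallInPlane_N4))
  have n23 : MatEquiv (ZMod 2) V SpaceN2 → ¬ MatEquiv (ZMod 2) V SpaceN3 := fun h h' =>
    not_twoThinCols_N2 ((hA h).1 ((hA h').2 twoThinCols_N3))
  have n24 : MatEquiv (ZMod 2) V SpaceN2 → ¬ MatEquiv (ZMod 2) V SpaceN4 := fun h h' =>
    not_twoThinRows_N4 ((hB h').1 ((hB h).2 twoThinRows_N2))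
  have n34 : MatEquiv (ZMod 2) V SpaceN3 → ¬ MatEquiv (ZMod 2) V SpaceN4 := fun h h' =>
    not_twoThinCols_N4 ((hA h').1 ((hA h).2 twoThinCols_N3))
  rcases exists_equiv V hV hprim hdim with h | h | h | h
  · exact .inl ⟨h, n12 h, n13 h, n14 h⟩
  · exact .inr (.inl ⟨fun h' => n12 h' h, h, n23 h, n24 h⟩)
  · exact .inr (.inr (.inl ⟨fun h' => n13 h' h, fun h' => n23 h' h, h, n34 h⟩))
  · exact .inr (.inr (.inr ⟨fun h' => n14 h' h, fun h' => n24 h' h, fun h' => n34 h' h, h⟩))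
end

section
/- Up to similarity, there are exactly three irreducible 3-dimensional linear subspaces of the 3×3 matrices over F2 with trivial spectrum, namely: T1 = {[[a,b,a],[a,a,c],[b+c,a,a]] : a,b,c ∈ F2}, T2 = {[[a,b,a],[a,a,c],[0,a,a]] : a,b,c ∈ F2}, and T3 = {[[a,b,a],[a,0,c],[0,a,a]] : a,b,c ∈ F2}. That is, each of T1, T2, T3 is an irreducible 3-dimensional trivial spectrum subspace, they are pairwise not similar, and every irreducible 3-dimensional trivial spectrum subspace of the 3×3 matrices over F2 is similar to one of them. -/
/-!
The classification is a finite search made small by similarity.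

A space `V` with trivial spectrum consists of matrices `M` with `det (M + 1) ≠ 0`. A nonzero matrix
with this property is similar to one of five representatives (`normalizes_spec`), so after
conjugation `V` contains a representative `a`. Choosing `b` and `c` minimal in a fixed total order
of the matrices, outside `{0, a}` and outside the span of `a, b`, gives each `3`-dimensional space
containing `a` a unique basis `a, b, c` (`exists_normalized_basis`), which leaves 61 triples. For
each of them (`search`) either the three matrices have a common right or left kernel vector, in
which case `V` is reducible (`exists_mulVec_ne_zero`, `exists_vecMul_ne_zero`), or an explicit
matrix conjugates all three into one of the model spaces, and then `V` onto it by equality of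
dimensions (`similar_of_sendsTo`).

The search runs in the kernel on matrices coded as nine-bit natural numbers; addition becomes
bitwise exclusive or (`dec_xor`), and the product is computed by `mul` (`dec_mul`).

The model spaces are irreducible because a proper nonzero invariant subspace gives a nonzero
vector `x` and a nonzero functional `y` with `y x = y M x = y M N x = 0` for all `M, N` in the space
(`irred_of_forall`). They are told apart by determinants and traces: all matrices of the first
are singular, the invertible matrices of the second have trace `1`, and the third contains an
invertible matrix of trace `0`.
-/

open Matrix

/-- A subspace of square matrices has *trivial spectrum* when no matrix of it has a nonzero
eigenvalue. -/
def TrivialSpectrum {n : ℕ} (V : Submodule (ZMod 2) (Matrix (Fin n) (Fin n) (ZMod 2))) : Prop :=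
  ∀ M ∈ V, ∀ (c : ZMod 2) (x : Fin n → ZMod 2), c ≠ 0 → x ≠ 0 → M.mulVec x ≠ c • x

/-- Two subspaces of square matrices are *similar* when one is obtained from the other by
conjugating by a fixed invertible matrix. -/
def MatSimilar {n : ℕ} (V₁ V₂ : Submodule (ZMod 2) (Matrix (Fin n) (Fin n) (ZMod 2))) : Prop :=
  ∃ P : Matrix (Fin n) (Fin n) (ZMod 2), IsUnit P ∧
    (V₂ : Set (Matrix (Fin n) (Fin n) (ZMod 2))) =
      (fun M => P * M * P⁻¹) '' (V₁ : Set (Matrix (Fin n) (Fin n) (ZMod 2)))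

/-- A subspace of square matrices is *irreducible* when it stabilizes no nonzero proper
subspace of the underlying vector space. -/
def IrredMatSpace {n : ℕ} (V : Submodule (ZMod 2) (Matrix (Fin n) (Fin n) (ZMod 2))) : Prop :=
  ¬ ∃ F : Submodule (ZMod 2) (Fin n → ZMod 2), F ≠ ⊥ ∧ F ≠ ⊤ ∧
      ∀ M ∈ V, ∀ x ∈ F, M.mulVec x ∈ F

/-- `T1`: the matrices `!![a, b, a; a, a, c; b + c, a, a]`. -/
def SpaceT1 : Submodule (ZMod 2) (Matrix (Fin 3) (Fin 3) (ZMod 2)) where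
  carrier := {M | ∃ a b c : ZMod 2, M = !![a, b, a; a, a, c; b + c, a, a]}
  add_mem' := by
    rintro M N ⟨a, b, c, rfl⟩ ⟨a', b', c', rfl⟩
    exact ⟨a + a', b + b', c + c', by revert a b c a' b' c'; decide⟩
  zero_mem' := ⟨0, 0, 0, by decide⟩
  smul_mem' := by
    rintro k M ⟨a, b, c, rfl⟩
    exact ⟨k * a, k * b, k * c, by revert k a b c; decide⟩

/-- `T2`: the matrices `!![a, b, a; a, a, c; 0, a, a]`. -/
def SpaceT2 : Submodule (ZMod 2) (Matrix (Fin 3) (Fin 3) (ZMod 2)) where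
  carrier := {M | ∃ a b c : ZMod 2, M = !![a, b, a; a, a, c; 0, a, a]}
  add_mem' := by
    rintro M N ⟨a, b, c, rfl⟩ ⟨a', b', c', rfl⟩
    exact ⟨a + a', b + b', c + c', by revert a b c a' b' c'; decide⟩
  zero_mem' := ⟨0, 0, 0, by decide⟩
  smul_mem' := by
    rintro k M ⟨a, b, c, rfl⟩
    exact ⟨k * a, k * b, k * c, by revert k a b c; decide⟩

/-- `T3`: the matrices `!![a, b, a; a, 0, c; 0, a, a]`. -/
def SpaceT3 : Submodule (ZMod 2) (Matrix (Fin 3) (Fin 3) (ZMod 2)) where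
  carrier := {M | ∃ a b c : ZMod 2, M = !![a, b, a; a, 0, c; 0, a, a]}
  add_mem' := by
    rintro M N ⟨a, b, c, rfl⟩ ⟨a', b', c', rfl⟩
    exact ⟨a + a', b + b', c + c', by revert a b c a' b' c'; decide⟩
  zero_mem' := ⟨0, 0, 0, by decide⟩
  smul_mem' := by
    rintro k M ⟨a, b, c, rfl⟩
    exact ⟨k * a, k * b, k * c, by revert k a b c; decide⟩

namespace TrivSpec

/-- `3 × 3` matrices over the field with two elements. -/
abbrev Mat := Matrix (Fin 3) (Fin 3) (ZMod 2)

/-! ### Matrices as nine-bit numbers -/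

/-- The element of `ZMod 2` given by a truth value. -/
def ofBool (b : Bool) : ZMod 2 := if b then 1 else 0

/-- The matrix coded by `n`: its `(i, j)` entry is the bit `3 * i + j` of `n`. -/
def dec (n : ℕ) : Mat := Matrix.of fun i j => ofBool (n.testBit (3 * (i : ℕ) + (j : ℕ)))

/-- The product of coded matrices, as the sum of the three products (column `k`) * (row `k`).
The bits `0, 3, 6` carry a column and the bits `0, 1, 2` a row, so that the product of these two
natural numbers codes the product of the column and the row. -/
def mul (a b : ℕ) : ℕ :=
  ((a &&& 73) * (b &&& 7)) ^^^ (((a >>> 1) &&& 73) * ((b >>> 3) &&& 7)) ^^^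
    (((a >>> 2) &&& 73) * ((b >>> 6) &&& 7))

/-- Whether the matrix coded by `n` is invertible: the Leibniz formula over the two-element
field. -/
def detB (n : ℕ) : Bool :=
  ((n.testBit 0 && ((n.testBit 4 && n.testBit 8) ^^ (n.testBit 5 && n.testBit 7))) ^^
    (n.testBit 1 && ((n.testBit 3 && n.testBit 8) ^^ (n.testBit 5 && n.testBit 6)))) ^^
    (n.testBit 2 && ((n.testBit 3 && n.testBit 7) ^^ (n.testBit 4 && n.testBit 6)))

lemma ofBool_xor (a b : Bool) : ofBool (a ^^ b) = ofBool a + ofBool b := by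
  revert a b; decide

lemma ofBool_and (a b : Bool) : ofBool (a && b) = ofBool a * ofBool b := by
  revert a b; decide

lemma dec_xor (a b : ℕ) : dec (a ^^^ b) = dec a + dec b := by
  ext i j
  simp [dec, Nat.testBit_xor, ofBool_xor]

lemma dec_zero : dec 0 = 0 := by
  ext i j
  simp [dec, ofBool]

lemma dec_one : dec 273 = 1 := by decide

lemma exists_dec (M : Mat) : ∃ n < 512, dec n = M := by
  have hinj : Function.Injective (fun n : Fin 512 => dec n) := by
    intro m n h
    have key : ∀ k : Fin 9, (m : ℕ).testBit k = (n : ℕ).testBit k := by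
      intro k
      have hk := congrFun (congrFun h (⟨(k : ℕ) / 3, by omega⟩ : Fin 3))
        (⟨(k : ℕ) % 3, by omega⟩ : Fin 3)
      simp only [dec, Matrix.of_apply, Nat.div_add_mod] at hk
      revert hk
      generalize (m : ℕ).testBit k = p
      generalize (n : ℕ).testBit k = q
      revert p q
      decide
    apply Fin.ext
    apply Nat.eq_of_testBit_eq
    intro i
    by_cases hi : i < 9
    · exact key ⟨i, hi⟩
    · have h1 : (512 : ℕ) ≤ 2 ^ i := by
        calc (512 : ℕ) = 2 ^ 9 := by norm_num
          _ ≤ 2 ^ i := Nat.pow_le_pow_right (by norm_num) (by omega)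
      rw [Nat.testBit_lt_two_pow (lt_of_lt_of_le m.2 h1),
        Nat.testBit_lt_two_pow (lt_of_lt_of_le n.2 h1)]
  have hcard : Fintype.card (Fin 512) = Fintype.card Mat := by
    change _ = Fintype.card (Fin 3 → Fin 3 → ZMod 2)
    simp [ZMod.card]
  obtain ⟨n, hn⟩ := ((Fintype.bijective_iff_injective_and_card _).2 ⟨hinj, hcard⟩).2 M
  exact ⟨n, n.2, hn⟩

lemma testBit_col_mul_row (u w : ℕ) (i j : Fin 3) :
    ((u &&& 73) * (w &&& 7)).testBit (3 * (i : ℕ) + (j : ℕ)) =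
      (u.testBit (3 * (i : ℕ)) && w.testBit (j : ℕ)) := by
  have key : ∀ u < 128, ∀ w < 8, ∀ i j : Fin 3,
      ((u &&& 73) * (w &&& 7)).testBit (3 * (i : ℕ) + (j : ℕ)) =
        (u.testBit (3 * (i : ℕ)) && w.testBit (j : ℕ)) := by
    decide +kernel
  have h := key (u % 2 ^ 7) (Nat.mod_lt _ (by norm_num)) (w % 2 ^ 3) (Nat.mod_lt _ (by norm_num)) i j
  have e1 : u % 2 ^ 7 &&& 73 = u &&& 73 := by
    apply Nat.eq_of_testBit_eq
    intro k
    have : Nat.testBit 73 k = (decide (k < 7) && Nat.testBit 73 k) := by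
      by_cases hk : k < 7
      · simp [hk]
      · have : (73 : ℕ) < 2 ^ k := lt_of_lt_of_le (by norm_num : 73 < 2 ^ 7)
          (Nat.pow_le_pow_right (by norm_num) (by omega))
        simp [Nat.testBit_lt_two_pow this]
    rw [Nat.testBit_and, Nat.testBit_and, Nat.testBit_mod_two_pow, this]
    cases decide (k < 7) <;> simp
  have e2 : w % 2 ^ 3 &&& 7 = w &&& 7 := by
    rw [show (7 : ℕ) = 2 ^ 3 - 1 by norm_num, Nat.and_two_pow_sub_one_eq_mod,
      Nat.and_two_pow_sub_one_eq_mod, Nat.mod_mod]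
  rw [e1, e2, Nat.testBit_mod_two_pow, Nat.testBit_mod_two_pow] at h
  rw [h]
  have hi : 3 * (i : ℕ) < 7 := by omega
  have hj : (j : ℕ) < 3 := j.2
  simp [hi, hj]

lemma dec_mul (a b : ℕ) : dec (mul a b) = dec a * dec b := by
  ext i j
  simp only [dec, mul, Matrix.mul_apply, Matrix.of_apply, Fin.sum_univ_three, Nat.testBit_xor,
    ofBool_xor, testBit_col_mul_row, ofBool_and, Nat.testBit_shiftRight]
  simp [add_comm]

lemma det_dec (n : ℕ) : (dec n).det = ofBool (detB n) := by
  simp only [Matrix.det_fin_three, dec, Matrix.of_apply, detB, ofBool_xor, ofBool_and,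
    CharTwo.sub_eq_add]
  simp
  ring

/-! ### The finite search -/

/-- The `n`-th bit says whether the matrix coded by `n < 512` has no eigenvalue `1`. -/
def goodMask : ℕ :=
  5530720622310981199049019556527130139634849767204913079744425902712644823531119917533094727823542160186690052826696094755242064475458110281129942019250517

lemma goodMask_spec : ∀ n < 512, goodMask.testBit n = detB (n ^^^ 273) := by decide +kernel

/-- The codes of the nonzero matrices supported on the first column; they stand for the nonzero
column vectors. -/
def cols : List ℕ := [1, 8, 9, 64, 65, 72, 73]

/-- The codes of the nonzero matrices supported on the first row; they stand for the nonzero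
row vectors. -/
def rows : List ℕ := [1, 2, 3, 4, 5, 6, 7]

/-- Representatives of the similarity classes of nonzero matrices without the eigenvalue `1`.
Their characteristic polynomials are `X ^ 3` (the square-zero and the cyclic nilpotent matrices),
`X (X ^ 2 + X + 1)`, `X ^ 3 + X + 1` and `X ^ 3 + X ^ 2 + 1`. -/
def reps : List ℕ := [2, 34, 11, 106, 99]

/-- Some `Q` with columns `A x, x, y` conjugates the matrix `A` coded by `n` to one of `reps`. -/
def normalizes (n : ℕ) : Bool :=
  cols.any fun x => cols.any fun y =>
    let q := mul n x ^^^ (x <<< 1) ^^^ (y <<< 2)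
    detB q && reps.any fun r => mul n q == mul q r

lemma normalizes_spec :
    ∀ n < 512, n ≠ 0 → goodMask.testBit n = true → normalizes n = true := by decide +kernel

/-- The eight codes of the matrices of `SpaceT1`. -/
def list1 : List ℕ := [0, 34, 66, 96, 413, 447, 479, 509]

/-- The eight codes of the matrices of `SpaceT2`. -/
def list2 : List ℕ := [0, 2, 32, 34, 413, 415, 445, 447]

/-- The eight codes of the matrices of `SpaceT3`. -/
def list3 : List ℕ := [0, 2, 32, 34, 397, 399, 429, 431]

/-- Invertible matrices sufficient to conjugate every irreducible space met in the search to one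
of the three models. -/
def conjugators : List ℕ :=
  [273, 407, 99, 103, 234, 307, 98, 102, 111, 241, 244, 254, 275, 286, 401, 491, 93, 117, 141,
    159, 212, 233, 247, 417]

/-- Conjugation by `q` sends the matrix coded by `g` into the list `l`. -/
def sendsTo (q : ℕ) (l : List ℕ) (g : ℕ) : Bool := l.any fun t => mul g q == mul q t

/-- The matrices coded by `a, b, c` have a common nonzero right or left kernel vector, or one of
the `conjugators` sends all three of them into the same model space. -/
def settled (a b c : ℕ) : Bool :=
  (cols.any fun x => mul a x == 0 && mul b x == 0 && mul c x == 0) ||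
  (rows.any fun y => mul y a == 0 && mul y b == 0 && mul y c == 0) ||
  (conjugators.any fun q =>
    (sendsTo q list1 a && sendsTo q list1 b && sendsTo q list1 c) ||
    (sendsTo q list2 a && sendsTo q list2 b && sendsTo q list2 c) ||
    (sendsTo q list3 a && sendsTo q list3 b && sendsTo q list3 c))

/-- The numbers `n ≠ 0, a` for which `n` and `a + n` code matrices without the eigenvalue `1`,
one being kept of each pair `n, a + n`. -/
def adm (a n : ℕ) : Bool :=
  goodMask.testBit n && goodMask.testBit (a ^^^ n) && n.ble (a ^^^ n) && n != 0 && n != a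

/-- The candidates for the second and third vectors of a normalized basis that starts
with `a`. -/
def candidates (a : ℕ) : List ℕ := (List.range 512).filter (adm a)

/-- The candidates `b, c` complete `a` to a basis of a space with trivial spectrum, with `b ≤ c`
and with `c` the least code in its coset modulo the span of `a, b`. -/
def adm₂ (a b c : ℕ) : Bool :=
  b.ble c && goodMask.testBit (b ^^^ c) && goodMask.testBit (a ^^^ b ^^^ c) &&
  c.ble (b ^^^ c) && c.ble (a ^^^ b ^^^ c) && c != b && c != (a ^^^ b)

lemma search :
    (reps.all fun a => (candidates a).all fun b => (candidates a).all fun c =>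
      !(adm₂ a b c) || settled a b c) = true := by
  decide +kernel

/-! ### Conjugate spaces -/

/-- The conjugate `Q⁻¹ V Q` of a space of matrices. -/
noncomputable def conjSpace (Q : Mat) (V : Submodule (ZMod 2) Mat) : Submodule (ZMod 2) Mat :=
  V.map ((LinearMap.mulLeft (ZMod 2) Q⁻¹).comp (LinearMap.mulRight (ZMod 2) Q))

lemma mem_conjSpace {Q : Mat} {V : Submodule (ZMod 2) Mat} {N : Mat} :
    N ∈ conjSpace Q V ↔ ∃ M ∈ V, Q⁻¹ * (M * Q) = N := by
  simp [conjSpace, Submodule.mem_map]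

lemma similar_conjSpace {Q : Mat} (hQ : IsUnit Q.det) (V : Submodule (ZMod 2) Mat) :
    MatSimilar V (conjSpace Q V) := by
  refine ⟨Q⁻¹, (Matrix.isUnit_iff_isUnit_det _).2 (by simpa using hQ), ?_⟩
  ext N
  simp only [SetLike.mem_coe, mem_conjSpace, Set.mem_image]
  simp [Matrix.nonsing_inv_nonsing_inv Q hQ, Matrix.mul_assoc]

lemma finrank_conjSpace {Q : Mat} (hQ : IsUnit Q.det) (V : Submodule (ZMod 2) Mat) :
    Module.finrank (ZMod 2) (conjSpace Q V) = Module.finrank (ZMod 2) V := by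
  refine (Submodule.equivMapOfInjective _ ?_ V).finrank_eq.symm
  intro M N h
  have h' : Q⁻¹ * (M * Q) = Q⁻¹ * (N * Q) := h
  have := congrArg (fun X => Q * X * Q⁻¹) h'
  simpa [Matrix.mul_nonsing_inv_cancel_left _ _ hQ,
    Matrix.mul_nonsing_inv_cancel_right _ _ hQ] using this

lemma similar_trans {V₁ V₂ V₃ : Submodule (ZMod 2) Mat} (h₁ : MatSimilar V₁ V₂)
    (h₂ : MatSimilar V₂ V₃) : MatSimilar V₁ V₃ := by
  obtain ⟨P, hP, e₁⟩ := h₁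
  obtain ⟨R, hR, e₂⟩ := h₂
  refine ⟨R * P, hR.mul hP, ?_⟩
  rw [e₂, e₁, Set.image_image]
  refine Set.image_congr fun M _ => ?_
  simp [Matrix.mul_inv_rev, Matrix.mul_assoc]

lemma trivialSpectrum_conjSpace {Q : Mat} (hQ : IsUnit Q.det) {V : Submodule (ZMod 2) Mat}
    (hV : TrivialSpectrum V) : TrivialSpectrum (conjSpace Q V) := by
  intro N hN c x hc hx hNx
  obtain ⟨M, hM, rfl⟩ := mem_conjSpace.1 hN
  refine hV M hM c (Q.mulVec x) hc ?_ ?_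
  · intro h
    apply hx
    have := congrArg (Q⁻¹).mulVec h
    simpa [Matrix.mulVec_mulVec, Matrix.nonsing_inv_mul Q hQ] using this
  · have := congrArg Q.mulVec hNx
    rw [Matrix.mulVec_mulVec, Matrix.mul_nonsing_inv_cancel_left _ _ hQ, Matrix.mulVec_smul] at this
    rw [Matrix.mulVec_mulVec, this]

lemma irred_conjSpace {Q : Mat} (hQ : IsUnit Q.det) {V : Submodule (ZMod 2) Mat}
    (hV : IrredMatSpace V) : IrredMatSpace (conjSpace Q V) := by
  rintro ⟨F, hbot, htop, hF⟩
  let e : (Fin 3 → ZMod 2) ≃ₗ[ZMod 2] (Fin 3 → ZMod 2) :=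
    Matrix.toLinearEquiv' Q (Q.invertibleOfIsUnitDet hQ)
  have he : ∀ x, e x = Q.mulVec x := fun x => rfl
  refine hV ⟨F.map (e : (Fin 3 → ZMod 2) →ₗ[ZMod 2] (Fin 3 → ZMod 2)), ?_, ?_, ?_⟩
  · simpa [Submodule.map_eq_bot_iff] using hbot
  · intro h
    apply htop
    rw [eq_top_iff]
    intro x _
    have : e x ∈ F.map (e : (Fin 3 → ZMod 2) →ₗ[ZMod 2] (Fin 3 → ZMod 2)) := h ▸ trivial
    obtain ⟨y, hy, hxy⟩ := this
    rwa [e.injective hxy] at hy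
  · rintro M hM _ ⟨x, hx, rfl⟩
    refine ⟨_, hF _ (mem_conjSpace.2 ⟨M, hM, rfl⟩) x hx, ?_⟩
    change Q.mulVec _ = M.mulVec (Q.mulVec x)
    rw [Matrix.mulVec_mulVec, Matrix.mul_nonsing_inv_cancel_left _ _ hQ, Matrix.mulVec_mulVec]

/-! ### Consequences of the hypotheses on a space -/

lemma det_add_one_ne_zero {V : Submodule (ZMod 2) Mat} (hV : TrivialSpectrum V) {M : Mat}
    (hM : M ∈ V) : (M + 1).det ≠ 0 := by
  intro h
  obtain ⟨x, hx, h0⟩ := Matrix.exists_mulVec_eq_zero_iff.2 h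
  refine hV M hM 1 x one_ne_zero hx ?_
  rw [Matrix.add_mulVec, Matrix.one_mulVec] at h0
  rw [one_smul]
  have := eq_neg_of_add_eq_zero_left h0
  rwa [ZModModule.neg_eq_self] at this

lemma good_of_mem {V : Submodule (ZMod 2) Mat} (hV : TrivialSpectrum V) {n : ℕ} (hn : n < 512)
    (h : dec n ∈ V) : goodMask.testBit n = true := by
  rw [goodMask_spec n hn]
  have := det_add_one_ne_zero hV h
  rw [← dec_one, ← dec_xor, det_dec] at this
  revert this
  generalize detB (n ^^^ 273) = p
  revert p
  decide

lemma exists_mulVec_ne_zero {V : Submodule (ZMod 2) Mat} (hV : IrredMatSpace V)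
    {x : Fin 3 → ZMod 2} (hx : x ≠ 0) : ∃ M ∈ V, M.mulVec x ≠ 0 := by
  by_contra! h
  refine hV ⟨Submodule.span (ZMod 2) {x}, by simpa using hx, ?_, ?_⟩
  · intro ht
    have h1 := finrank_span_singleton (K := ZMod 2) hx
    rw [ht, finrank_top] at h1
    simp at h1
  · intro M hM y hy
    obtain ⟨k, rfl⟩ := Submodule.mem_span_singleton.1 hy
    rw [Matrix.mulVec_smul, h M hM, smul_zero]
    exact Submodule.zero_mem _

lemma exists_vecMul_ne_zero {V : Submodule (ZMod 2) Mat} (hV : IrredMatSpace V)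
    {y : Fin 3 → ZMod 2} (hy : y ≠ 0) : ∃ M ∈ V, Matrix.vecMul y M ≠ 0 := by
  by_contra! h
  let φ : (Fin 3 → ZMod 2) →ₗ[ZMod 2] ZMod 2 := dotProductBilin (ZMod 2) (ZMod 2) y
  have hφ : ∀ x, φ x = y ⬝ᵥ x := fun x => rfl
  refine hV ⟨LinearMap.ker φ, ?_, ?_, ?_⟩
  · intro hb
    have h1 := LinearMap.finrank_le_finrank_of_injective (LinearMap.ker_eq_bot.1 hb)
    simp at h1
  · intro ht
    apply hy
    ext i
    have : Pi.single i 1 ∈ LinearMap.ker φ := ht ▸ trivial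
    rw [LinearMap.mem_ker, hφ] at this
    simpa using this
  · intro M hM x _
    rw [LinearMap.mem_ker, hφ, Matrix.dotProduct_mulVec, h M hM, zero_dotProduct]

/-- Three matrices of a `3`-dimensional space that satisfy none of the seven nontrivial linear
relations over the two-element field span the space. -/
lemma mem_of_three {V W : Submodule (ZMod 2) Mat} (hV : Module.finrank (ZMod 2) V = 3)
    {A B C : Mat} (hA : A ∈ V) (hB : B ∈ V) (hC : C ∈ V)
    (hA0 : A ≠ 0) (hB0 : B ≠ 0) (hBA : B ≠ A)
    (hC0 : C ≠ 0) (hCA : C ≠ A) (hCB : C ≠ B) (hCAB : C ≠ A + B)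
    (hAW : A ∈ W) (hBW : B ∈ W) (hCW : C ∈ W) : V ≤ W := by
  have hli : LinearIndependent (ZMod 2) ![A, B, C] := by
    rw [Fintype.linearIndependent_iff]
    intro g hg
    simp only [Fin.sum_univ_three, Matrix.cons_val] at hg
    have h01 : ∀ k : ZMod 2, k = 0 ∨ k = 1 := by decide
    have hch : ∀ M N : Mat, M + N = 0 → N = M := fun M N h => by
      have := eq_neg_of_add_eq_zero_right h
      rwa [ZModModule.neg_eq_self] at this
    rcases h01 (g 0) with h0 | h0 <;> rcases h01 (g 1) with h1 | h1 <;>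
      rcases h01 (g 2) with h2 | h2 <;> simp only [h0, h1, h2, zero_smul, one_smul, zero_add,
        add_zero] at hg
    · intro i; fin_cases i <;> assumption
    · exact absurd hg hC0
    · exact absurd hg hB0
    · exact absurd (hch _ _ hg) hCB
    · exact absurd hg hA0
    · exact absurd (hch _ _ hg) hCA
    · exact absurd (hch _ _ hg) hBA
    · exact absurd (hch _ _ hg) hCAB
  have hle : Submodule.span (ZMod 2) (Set.range ![A, B, C]) ≤ V := by
    rw [Submodule.span_le]
    rintro _ ⟨i, rfl⟩
    fin_cases i <;> assumption
  have heq := Submodule.eq_of_le_of_finrank_eq hle (by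
    rw [finrank_span_eq_card hli, hV]; rfl)
  rw [← heq, Submodule.span_le]
  rintro _ ⟨i, rfl⟩
  fin_cases i <;> assumption

/-- A `3`-dimensional space has a matrix outside the span of any two matrices, with a code below
`512`. -/
lemma exists_code_notMem {V : Submodule (ZMod 2) Mat} (hV : Module.finrank (ZMod 2) V = 3)
    (A B : Mat) :
    ∃ n < 512, dec n ∈ V ∧ dec n ∉ Submodule.span (ZMod 2) (Set.range ![A, B]) := by
  by_contra! h
  have hle : V ≤ Submodule.span (ZMod 2) (Set.range ![A, B]) := by
    intro M hM
    obtain ⟨n, hn, rfl⟩ := exists_dec M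
    exact h n hn hM
  have h1 := Submodule.finrank_mono hle
  have h2 : Module.finrank (ZMod 2) (Submodule.span (ZMod 2) (Set.range ![A, B])) ≤ 2 := by
    simpa [Set.finrank] using finrank_range_le_card (R := ZMod 2) ![A, B]
  omega

/-! ### The classification -/

lemma isUnit_det_dec {q : ℕ} (h : detB q = true) : IsUnit (dec q).det := by
  rw [det_dec, h]
  exact isUnit_one

/-- If `Q` carries three generators of `V` into `T`, then it carries `V` onto `T`. -/
lemma similar_of_sendsTo {V T : Submodule (ZMod 2) Mat} {l : List ℕ}
    (hV : Module.finrank (ZMod 2) V = 3) (hT : Module.finrank (ZMod 2) T = 3)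
    (hl : ∀ t ∈ l, dec t ∈ T) {q a b c : ℕ} (hq : detB q = true)
    (hgen : ∀ W : Submodule (ZMod 2) Mat, dec a ∈ W → dec b ∈ W → dec c ∈ W → V ≤ W)
    (ha : sendsTo q l a = true) (hb : sendsTo q l b = true) (hc : sendsTo q l c = true) :
    MatSimilar V T := by
  have hQ := isUnit_det_dec hq
  have key : ∀ g, sendsTo q l g = true → (dec q)⁻¹ * (dec g * dec q) ∈ T := by
    intro g hg
    simp only [sendsTo, List.any_eq_true, beq_iff_eq] at hg
    obtain ⟨t, ht, h⟩ := hg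
    rw [← dec_mul, h, dec_mul, Matrix.nonsing_inv_mul_cancel_left _ _ hQ]
    exact hl t ht
  have hle : conjSpace (dec q) V ≤ T := by
    rw [conjSpace, Submodule.map_le_iff_le_comap]
    exact hgen _ (key a ha) (key b hb) (key c hc)
  have heq := Submodule.eq_of_le_of_finrank_eq hle (by rw [finrank_conjSpace hQ, hV, hT])
  rw [← heq]
  exact similar_conjSpace hQ V

lemma settled_conclusion {V : Submodule (ZMod 2) Mat} (hirr : IrredMatSpace V)
    (hV : Module.finrank (ZMod 2) V = 3)
    (h1 : Module.finrank (ZMod 2) SpaceT1 = 3) (h2 : Module.finrank (ZMod 2) SpaceT2 = 3)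
    (h3 : Module.finrank (ZMod 2) SpaceT3 = 3) {a b c : ℕ}
    (hgen : ∀ W : Submodule (ZMod 2) Mat, dec a ∈ W → dec b ∈ W → dec c ∈ W → V ≤ W)
    (h : settled a b c = true) :
    MatSimilar V SpaceT1 ∨ MatSimilar V SpaceT2 ∨ MatSimilar V SpaceT3 := by
  simp only [settled, Bool.or_eq_true, List.any_eq_true, Bool.and_eq_true, beq_iff_eq] at h
  rcases h with (⟨x, hx, ⟨ha, hb⟩, hc⟩ | ⟨y, hy, ⟨ha, hb⟩, hc⟩) | ⟨q, hq, h⟩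
  · exfalso
    -- The first column of `dec x` is a common kernel vector.
    have hx0 : (dec x).mulVec (Pi.single 0 1) ≠ 0 := by clear ha hb hc; revert x; decide
    obtain ⟨M, hM, hne⟩ := exists_mulVec_ne_zero hirr hx0
    have hker : V ≤ LinearMap.ker (LinearMap.mulRight (ZMod 2) (dec x)) := by
      apply hgen <;> rw [LinearMap.mem_ker, LinearMap.mulRight_apply, ← dec_mul] <;>
        simp only [ha, hb, hc, dec_zero]
    have hMx : M * dec x = 0 := hker hM
    rw [Matrix.mulVec_mulVec, hMx, Matrix.zero_mulVec] at hne
    exact hne rfl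
  · exfalso
    -- The first row of `dec y` is a common left kernel vector.
    have hy0 : Matrix.vecMul (Pi.single 0 1) (dec y) ≠ 0 := by clear ha hb hc; revert y; decide
    obtain ⟨M, hM, hne⟩ := exists_vecMul_ne_zero hirr hy0
    have hker : V ≤ LinearMap.ker (LinearMap.mulLeft (ZMod 2) (dec y)) := by
      apply hgen <;> rw [LinearMap.mem_ker, LinearMap.mulLeft_apply, ← dec_mul] <;>
        simp only [ha, hb, hc, dec_zero]
    have hyM : dec y * M = 0 := hker hM
    rw [Matrix.vecMul_vecMul, hyM, Matrix.vecMul_zero] at hne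
    exact hne rfl
  · have hdet : detB q = true := by clear h; revert q; decide
    have l1 : ∀ t ∈ list1, dec t ∈ SpaceT1 := by
      change ∀ t ∈ list1, ∃ a b c : ZMod 2, dec t = !![a, b, a; a, a, c; b + c, a, a]
      decide
    have l2 : ∀ t ∈ list2, dec t ∈ SpaceT2 := by
      change ∀ t ∈ list2, ∃ a b c : ZMod 2, dec t = !![a, b, a; a, a, c; 0, a, a]
      decide
    have l3 : ∀ t ∈ list3, dec t ∈ SpaceT3 := by
      change ∀ t ∈ list3, ∃ a b c : ZMod 2, dec t = !![a, b, a; a, 0, c; 0, a, a]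
      decide
    rcases h with (⟨⟨ha, hb⟩, hc⟩ | ⟨⟨ha, hb⟩, hc⟩) | ⟨⟨ha, hb⟩, hc⟩
    · exact Or.inl (similar_of_sendsTo hV h1 l1 hdet hgen ha hb hc)
    · exact Or.inr (Or.inl (similar_of_sendsTo hV h2 l2 hdet hgen ha hb hc))
    · exact Or.inr (Or.inr (similar_of_sendsTo hV h3 l3 hdet hgen ha hb hc))

/-- A space that contains the nonzero matrix coded by `a` has a normalized basis `a, b, c`: `b` is
the least code of an element outside `{0, a}`, and `c` the least code of an element outside the
span of `a, b`. -/
lemma exists_normalized_basis {V : Submodule (ZMod 2) Mat} (hts : TrivialSpectrum V)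
    (hV : Module.finrank (ZMod 2) V = 3) {a : ℕ} (ha : a < 512) (haV : dec a ∈ V)
    (ha0 : dec a ≠ 0) :
    ∃ b ∈ candidates a, ∃ c ∈ candidates a, adm₂ a b c = true ∧
      ∀ W : Submodule (ZMod 2) Mat, dec a ∈ W → dec b ∈ W → dec c ∈ W → V ≤ W := by
  classical
  have hxor : ∀ {m n : ℕ}, m < 512 → n < 512 → m ^^^ n < 512 := fun {m n} hm hn =>
    Nat.xor_lt_two_pow (n := 9) hm hn
  have hmem : ∀ {m n : ℕ}, dec m ∈ V → dec n ∈ V → dec (m ^^^ n) ∈ V := fun {m n} hm hn => by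
    rw [dec_xor]; exact V.add_mem hm hn
  have hch : ∀ {M N : Mat}, M + N = 0 → N = M := fun {M N} h => by
    have := eq_neg_of_add_eq_zero_right h
    rwa [ZModModule.neg_eq_self] at this
  have hne : ∀ {m n : ℕ}, dec m ≠ dec n → m ≠ n := fun h e => h (e ▸ rfl)
  have exB : ∃ n, n < 512 ∧ dec n ∈ V ∧ dec n ≠ 0 ∧ dec n ≠ dec a := by
    obtain ⟨n, hn, hnV, hns⟩ := exists_code_notMem hV (dec a) (dec a)
    refine ⟨n, hn, hnV, fun h => hns (h ▸ Submodule.zero_mem _), fun h => hns ?_⟩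
    exact h ▸ Submodule.subset_span ⟨0, rfl⟩
  obtain ⟨hb, hbV, hb0, hba⟩ := Nat.find_spec exB
  have minB : ∀ n, n < 512 → dec n ∈ V → dec n ≠ 0 → dec n ≠ dec a → Nat.find exB ≤ n :=
    fun n h1 h2 h3 h4 => Nat.find_min' exB ⟨h1, h2, h3, h4⟩
  generalize Nat.find exB = b at hb hbV hb0 hba minB
  have exC : ∃ n, n < 512 ∧ dec n ∈ V ∧ dec n ≠ 0 ∧ dec n ≠ dec a ∧ dec n ≠ dec b ∧
      dec n ≠ dec a + dec b := by
    obtain ⟨n, hn, hnV, hns⟩ := exists_code_notMem hV (dec a) (dec b)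
    have sa : dec a ∈ Submodule.span (ZMod 2) (Set.range ![dec a, dec b]) :=
      Submodule.subset_span ⟨0, rfl⟩
    have sb : dec b ∈ Submodule.span (ZMod 2) (Set.range ![dec a, dec b]) :=
      Submodule.subset_span ⟨1, rfl⟩
    exact ⟨n, hn, hnV, fun h => hns (h ▸ Submodule.zero_mem _), fun h => hns (h ▸ sa),
      fun h => hns (h ▸ sb), fun h => hns (h ▸ Submodule.add_mem _ sa sb)⟩
  obtain ⟨hc, hcV, hc0, hca, hcb, hcab⟩ := Nat.find_spec exC
  have minC : ∀ n, n < 512 → dec n ∈ V → dec n ≠ 0 → dec n ≠ dec a → dec n ≠ dec b →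
      dec n ≠ dec a + dec b → Nat.find exC ≤ n :=
    fun n h1 h2 h3 h4 h5 h6 => Nat.find_min' exC ⟨h1, h2, h3, h4, h5, h6⟩
  generalize Nat.find exC = c at hc hcV hc0 hca hcb hcab minC
  have gd : ∀ {n}, n < 512 → dec n ∈ V → goodMask.testBit n = true := fun h h' =>
    good_of_mem hts h h'
  have add_self' : ∀ M : Mat, M + M = 0 := fun M => ZModModule.add_self M
  -- Adding `a` keeps `b` outside `{0, a}`, and adding elements of the span of `a, b` keeps `c`
  -- outside that span; minimality then compares the codes.
  have minAB : b ≤ a ^^^ b := by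
    refine minB _ (hxor ha hb) (hmem haV hbV) ?_ ?_ <;> rw [dec_xor]
    · exact fun h => hba (hch h)
    · exact fun h => hb0 (by simpa using h)
  have minAC : c ≤ a ^^^ c := by
    refine minC _ (hxor ha hc) (hmem haV hcV) ?_ ?_ ?_ ?_ <;> rw [dec_xor]
    · exact fun h => hca (hch h)
    · exact fun h => hc0 (by simpa using h)
    · exact fun h => hcab (by rw [← h, ← add_assoc, add_self', zero_add])
    · exact fun h => hcb (add_left_cancel h)
  have minBC : c ≤ b ^^^ c := by
    refine minC _ (hxor hb hc) (hmem hbV hcV) ?_ ?_ ?_ ?_ <;> rw [dec_xor]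
    · exact fun h => hcb (hch h)
    · exact fun h => hcab (by rw [← h, add_comm (dec b), add_assoc, add_self', add_zero])
    · exact fun h => hc0 (by simpa using h)
    · exact fun h => hca (add_left_cancel (h.trans (add_comm _ _)))
  have minABC : c ≤ a ^^^ b ^^^ c := by
    refine minC _ (hxor (hxor ha hb) hc) (hmem (hmem haV hbV) hcV) ?_ ?_ ?_ ?_ <;>
      rw [dec_xor, dec_xor]
    · exact fun h => hcab (hch h)
    · exact fun h => hcb (hch (by simpa [add_assoc] using h))
    · exact fun h => hca (hch (by rwa [add_right_comm, add_eq_right] at h))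
    · exact fun h => hc0 (by simpa using h)
  refine ⟨b, ?_, c, ?_, ?_, fun W h1 h2 h3 =>
    mem_of_three hV haV hbV hcV ha0 hb0 hba hc0 hca hcb hcab h1 h2 h3⟩
  · simp only [candidates, List.mem_filter, List.mem_range, adm, Bool.and_eq_true, bne_iff_ne,
      Nat.ble_eq]
    exact ⟨hb, ⟨⟨⟨gd hb hbV, gd (hxor ha hb) (hmem haV hbV)⟩, minAB⟩,
      hne (dec_zero ▸ hb0)⟩, hne hba⟩
  · simp only [candidates, List.mem_filter, List.mem_range, adm, Bool.and_eq_true, bne_iff_ne,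
      Nat.ble_eq]
    exact ⟨hc, ⟨⟨⟨gd hc hcV, gd (hxor ha hc) (hmem haV hcV)⟩, minAC⟩,
      hne (dec_zero ▸ hc0)⟩, hne hca⟩
  · simp only [adm₂, Bool.and_eq_true, bne_iff_ne, Nat.ble_eq]
    exact ⟨⟨⟨⟨⟨⟨minB c hc hcV hc0 hca, gd (hxor hb hc) (hmem hbV hcV)⟩,
      gd (hxor (hxor ha hb) hc) (hmem (hmem haV hbV) hcV)⟩, minBC⟩, minABC⟩, hne hcb⟩,
      hne (dec_xor a b ▸ hcab)⟩

lemma classification {V : Submodule (ZMod 2) Mat} (hts : TrivialSpectrum V)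
    (hirr : IrredMatSpace V) (hV : Module.finrank (ZMod 2) V = 3)
    (h1 : Module.finrank (ZMod 2) SpaceT1 = 3) (h2 : Module.finrank (ZMod 2) SpaceT2 = 3)
    (h3 : Module.finrank (ZMod 2) SpaceT3 = 3) :
    MatSimilar V SpaceT1 ∨ MatSimilar V SpaceT2 ∨ MatSimilar V SpaceT3 := by
  obtain ⟨n, hn, hnV, hns⟩ := exists_code_notMem hV 0 0
  have hn0 : n ≠ 0 := by
    rintro rfl
    rw [dec_zero] at hns
    exact hns (Submodule.zero_mem _)
  have hnorm := normalizes_spec n hn hn0 (good_of_mem hts hn hnV)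
  simp only [normalizes, List.any_eq_true, Bool.and_eq_true, beq_iff_eq] at hnorm
  obtain ⟨x, -, y, -, hq, a, har, hqa⟩ := hnorm
  generalize mul n x ^^^ (x <<< 1) ^^^ (y <<< 2) = q at hq hqa
  have hQ := isUnit_det_dec hq
  have haV : dec a ∈ conjSpace (dec q) V := by
    refine mem_conjSpace.2 ⟨dec n, hnV, ?_⟩
    rw [← dec_mul, hqa, dec_mul, Matrix.nonsing_inv_mul_cancel_left _ _ hQ]
  have ha : a < 512 := by clear hqa haV; revert a; decide
  have ha0 : dec a ≠ 0 := by clear hqa haV ha; revert a; decide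
  have hV' := (finrank_conjSpace hQ V).trans hV
  obtain ⟨b, hb, c, hc, hadm, hgen⟩ :=
    exists_normalized_basis (trivialSpectrum_conjSpace hQ hts) hV' ha haV ha0
  have hs := search
  simp only [List.all_eq_true] at hs
  have hset := hs a har b hb c hc
  rw [hadm, Bool.not_true, Bool.false_or] at hset
  have hsim := similar_conjSpace hQ V
  exact (settled_conclusion (irred_conjSpace hQ hirr) hV' h1 h2 h3 hgen hset).imp
    (similar_trans hsim) (Or.imp (similar_trans hsim) (similar_trans hsim))

/-! ### The three model spaces -/

/-- An invariant proper nonzero subspace would provide a nonzero vector `x` in it and a nonzero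
functional `y` vanishing on it, hence on `x`, `M x` and `M N x` for all `M, N` in the space. -/
lemma irred_of_forall {V : Submodule (ZMod 2) Mat}
    (h : ∀ x y : Fin 3 → ZMod 2, x ≠ 0 → y ≠ 0 →
      y ⬝ᵥ x ≠ 0 ∨ ∃ M ∈ V, y ⬝ᵥ M.mulVec x ≠ 0 ∨ ∃ N ∈ V, y ⬝ᵥ M.mulVec (N.mulVec x) ≠ 0) :
    IrredMatSpace V := by
  rintro ⟨F, hbot, htop, hF⟩
  obtain ⟨x, hxF, hx⟩ := Submodule.exists_mem_ne_zero_of_ne_bot hbot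
  obtain ⟨φ, hφ, hker⟩ := Submodule.exists_le_ker_of_lt_top F (lt_top_iff_ne_top.2 htop)
  obtain ⟨y, rfl⟩ := (dotProductEquiv (ZMod 2) (Fin 3)).surjective φ
  have hy : y ≠ 0 := by
    rintro rfl
    exact hφ (map_zero _)
  have hz : ∀ z ∈ F, y ⬝ᵥ z = 0 := fun z hzF => hker hzF
  rcases h x y hx hy with h | ⟨M, hM, h | ⟨N, hN, h⟩⟩
  · exact h (hz x hxF)
  · exact h (hz _ (hF M hM x hxF))
  · exact h (hz _ (hF M hM _ (hF N hN x hxF)))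

/-- A parametrized space of matrices, the parametrization being linear and injective, has
dimension `3`. -/
lemma finrank_of_param {V : Submodule (ZMod 2) Mat} (f : (Fin 3 → ZMod 2) → Mat)
    (hadd : ∀ u v, f (u + v) = f u + f v) (hinj : ∀ u, f u = 0 → u = 0)
    (hV : ∀ M, M ∈ V ↔ ∃ u, f u = M) : Module.finrank (ZMod 2) V = 3 := by
  let g : (Fin 3 → ZMod 2) →ₗ[ZMod 2] Mat := (AddMonoidHom.mk' f hadd).toZModLinearMap 2
  have hg : Function.Injective g := (injective_iff_map_eq_zero g).2 hinj
  have hr : V = LinearMap.range g := by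
    ext M
    exact hV M
  rw [hr, LinearMap.finrank_range_of_inj hg]
  simp

lemma finrank1 : Module.finrank (ZMod 2) SpaceT1 = 3 := by
  refine finrank_of_param (fun u => !![u 0, u 1, u 0; u 0, u 0, u 2; u 1 + u 2, u 0, u 0])
    (by decide +kernel) (by decide +kernel) fun M => ?_
  constructor
  · rintro ⟨a, b, c, rfl⟩
    exact ⟨![a, b, c], rfl⟩
  · rintro ⟨u, rfl⟩
    exact ⟨u 0, u 1, u 2, rfl⟩

lemma finrank2 : Module.finrank (ZMod 2) SpaceT2 = 3 := by
  refine finrank_of_param (fun u => !![u 0, u 1, u 0; u 0, u 0, u 2; 0, u 0, u 0])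
    (by decide +kernel) (by decide +kernel) fun M => ?_
  constructor
  · rintro ⟨a, b, c, rfl⟩
    exact ⟨![a, b, c], rfl⟩
  · rintro ⟨u, rfl⟩
    exact ⟨u 0, u 1, u 2, rfl⟩

lemma finrank3 : Module.finrank (ZMod 2) SpaceT3 = 3 := by
  refine finrank_of_param (fun u => !![u 0, u 1, u 0; u 0, 0, u 2; 0, u 0, u 0])
    (by decide +kernel) (by decide +kernel) fun M => ?_
  constructor
  · rintro ⟨a, b, c, rfl⟩
    exact ⟨![a, b, c], rfl⟩
  · rintro ⟨u, rfl⟩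
    exact ⟨u 0, u 1, u 2, rfl⟩

lemma ts1 : TrivialSpectrum SpaceT1 := by
  rintro _ ⟨a, b, c, rfl⟩
  revert a b c
  decide +kernel

lemma ts2 : TrivialSpectrum SpaceT2 := by
  rintro _ ⟨a, b, c, rfl⟩
  revert a b c
  decide +kernel

lemma ts3 : TrivialSpectrum SpaceT3 := by
  rintro _ ⟨a, b, c, rfl⟩
  revert a b c
  decide +kernel

lemma irred1 : IrredMatSpace SpaceT1 := by
  refine irred_of_forall fun x y hx hy => ?_
  have key : ∀ x y : Fin 3 → ZMod 2, x ≠ 0 → y ≠ 0 → y ⬝ᵥ x ≠ 0 ∨ ∃ a b c : ZMod 2,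
      y ⬝ᵥ (!![a, b, a; a, a, c; b + c, a, a] : Mat).mulVec x ≠ 0 ∨ ∃ a' b' c' : ZMod 2,
      y ⬝ᵥ (!![a, b, a; a, a, c; b + c, a, a] : Mat).mulVec
        ((!![a', b', a'; a', a', c'; b' + c', a', a'] : Mat).mulVec x) ≠ 0 := by
    decide +kernel
  rcases key x y hx hy with h | ⟨a, b, c, h | ⟨a', b', c', h⟩⟩
  · exact Or.inl h
  · exact Or.inr ⟨_, ⟨a, b, c, rfl⟩, Or.inl h⟩
  · exact Or.inr ⟨_, ⟨a, b, c, rfl⟩, Or.inr ⟨_, ⟨a', b', c', rfl⟩, h⟩⟩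

lemma irred2 : IrredMatSpace SpaceT2 := by
  refine irred_of_forall fun x y hx hy => ?_
  have key : ∀ x y : Fin 3 → ZMod 2, x ≠ 0 → y ≠ 0 → y ⬝ᵥ x ≠ 0 ∨ ∃ a b c : ZMod 2,
      y ⬝ᵥ (!![a, b, a; a, a, c; 0, a, a] : Mat).mulVec x ≠ 0 ∨ ∃ a' b' c' : ZMod 2,
      y ⬝ᵥ (!![a, b, a; a, a, c; 0, a, a] : Mat).mulVec
        ((!![a', b', a'; a', a', c'; 0, a', a'] : Mat).mulVec x) ≠ 0 := by
    decide +kernel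
  rcases key x y hx hy with h | ⟨a, b, c, h | ⟨a', b', c', h⟩⟩
  · exact Or.inl h
  · exact Or.inr ⟨_, ⟨a, b, c, rfl⟩, Or.inl h⟩
  · exact Or.inr ⟨_, ⟨a, b, c, rfl⟩, Or.inr ⟨_, ⟨a', b', c', rfl⟩, h⟩⟩

lemma irred3 : IrredMatSpace SpaceT3 := by
  refine irred_of_forall fun x y hx hy => ?_
  have key : ∀ x y : Fin 3 → ZMod 2, x ≠ 0 → y ≠ 0 → y ⬝ᵥ x ≠ 0 ∨ ∃ a b c : ZMod 2,
      y ⬝ᵥ (!![a, b, a; a, 0, c; 0, a, a] : Mat).mulVec x ≠ 0 ∨ ∃ a' b' c' : ZMod 2,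
      y ⬝ᵥ (!![a, b, a; a, 0, c; 0, a, a] : Mat).mulVec
        ((!![a', b', a'; a', 0, c'; 0, a', a'] : Mat).mulVec x) ≠ 0 := by
    decide +kernel
  rcases key x y hx hy with h | ⟨a, b, c, h | ⟨a', b', c', h⟩⟩
  · exact Or.inl h
  · exact Or.inr ⟨_, ⟨a, b, c, rfl⟩, Or.inl h⟩
  · exact Or.inr ⟨_, ⟨a, b, c, rfl⟩, Or.inr ⟨_, ⟨a', b', c', rfl⟩, h⟩⟩

/-- Similar spaces contain matrices with the same pairs (determinant, trace). -/
lemma exists_det_trace {V W : Submodule (ZMod 2) Mat} (h : MatSimilar V W) {N : Mat}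
    (hN : N ∈ W) : ∃ M ∈ V, M.det = N.det ∧ M.trace = N.trace := by
  obtain ⟨P, hP, e⟩ := h
  have hN' : N ∈ (W : Set Mat) := hN
  rw [e] at hN'
  obtain ⟨M, hM, rfl⟩ := hN'
  refine ⟨M, hM, ?_, ?_⟩
  · simp only [Matrix.det_conj hP]
  · simp only [Matrix.trace_conj hP]

lemma det_eq_zero_of_mem1 {M : Mat} (hM : M ∈ SpaceT1) : M.det = 0 := by
  obtain ⟨a, b, c, rfl⟩ := hM
  rw [Matrix.det_fin_three]
  revert a b c
  decide +kernel

lemma not_similar12 : ¬ MatSimilar SpaceT1 SpaceT2 := by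
  intro h
  obtain ⟨M, hM, hd, -⟩ := exists_det_trace h (N := dec 415) ⟨1, 1, 0, by decide⟩
  rw [det_eq_zero_of_mem1 hM, det_dec] at hd
  revert hd
  decide

lemma not_similar13 : ¬ MatSimilar SpaceT1 SpaceT3 := by
  intro h
  obtain ⟨M, hM, hd, -⟩ := exists_det_trace h (N := dec 397) ⟨1, 0, 0, by decide⟩
  rw [det_eq_zero_of_mem1 hM, det_dec] at hd
  revert hd
  decide

lemma not_similar23 : ¬ MatSimilar SpaceT2 SpaceT3 := by
  intro h
  -- The invertible matrices of `SpaceT2` have trace `1`, while `SpaceT3` contains an invertible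
  -- matrix of trace `0`.
  obtain ⟨M, hM, hd, ht⟩ := exists_det_trace h (N := dec 397) ⟨1, 0, 0, by decide⟩
  obtain ⟨a, b, c, rfl⟩ := hM
  rw [Matrix.det_fin_three, det_dec] at hd
  rw [Matrix.trace_fin_three, Matrix.trace_fin_three] at ht
  revert a b c
  decide +kernel

end TrivSpec

theorem classification_of_irreducible_trivial_spectrum_spaces :
    (TrivialSpectrum SpaceT1 ∧ IrredMatSpace SpaceT1 ∧
      Module.finrank (ZMod 2) SpaceT1 = 3) ∧
    (TrivialSpectrum SpaceT2 ∧ IrredMatSpace SpaceT2 ∧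
      Module.finrank (ZMod 2) SpaceT2 = 3) ∧
    (TrivialSpectrum SpaceT3 ∧ IrredMatSpace SpaceT3 ∧
      Module.finrank (ZMod 2) SpaceT3 = 3) ∧
    (¬ MatSimilar SpaceT1 SpaceT2 ∧ ¬ MatSimilar SpaceT1 SpaceT3 ∧
      ¬ MatSimilar SpaceT2 SpaceT3) ∧
    ∀ V : Submodule (ZMod 2) (Matrix (Fin 3) (Fin 3) (ZMod 2)),
      TrivialSpectrum V → IrredMatSpace V → Module.finrank (ZMod 2) V = 3 →
      MatSimilar V SpaceT1 ∨ MatSimilar V SpaceT2 ∨ MatSimilar V SpaceT3 := by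
  open TrivSpec in
  exact ⟨⟨ts1, irred1, finrank1⟩, ⟨ts2, irred2, finrank2⟩, ⟨ts3, irred3, finrank3⟩,
    ⟨not_similar12, not_similar13, not_similar23⟩,
    fun _ hts hirr hV => classification hts hirr hV finrank1 finrank2 finrank3⟩
end

section
/- Up to similarity, there are exactly three reducible 3-dimensional linear subspaces of the 3×3 matrices over F2 with trivial spectrum, namely: the space of strictly upper-triangular 3×3 matrices over F2; the space {[[0,a,x],[a,a,y],[0,0,0]] : a,x,y ∈ F2}; and the space {[[0,x,y],[0,0,a],[0,a,a]] : a,x,y ∈ F2}. That is, each of these three spaces is a reducible 3-dimensional trivial spectrum subspace, they are pairwise not similar, and every reducible 3-dimensional trivial spectrum subspace of the 3×3 matrices over F2 is similar to one of them. -/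
/-!
A subspace `V` of trivial spectrum satisfies `det (M - 1) ≠ 0` for every `M ∈ V`, a condition that is
invariant under conjugation. If `V` is reducible, then either its matrices have a common
eigenvector `x`, or they have a common left eigenvector `f` (cutting out an invariant plane); the
eigenvalue can only be `0`, so after a change of basis the first column, respectively the last row,
of each matrix of `V` vanishes (`exists_kernel`, `exists_basis_change`).

The complementary `2 × 2` blocks form an additively closed family of matrices without the eigenvalue
`1`. By a finite check, such a family over `F2` contains at most one nonzero matrix, and
that matrix is conjugate to `E₁₂` or to `C` (`block_normal_form`). After conjugation `V` therefore
lies in one of the three model spaces, and equality follows since all of them have dimension `3`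
(`similar_of_conj_mem`).

The three model spaces are pairwise non-similar because the first consists of nilpotent matrices
and the other two do not, while the third has a common kernel vector and the second has none.
-/

open Matrix

/-- The space of strictly upper-triangular `3 × 3` matrices over `F2`. -/
def NT3 : Submodule (ZMod 2) (Matrix (Fin 3) (Fin 3) (ZMod 2)) where
  carrier := {M | ∀ i j : Fin 3, j ≤ i → M i j = 0}
  add_mem' := by
    intro M N hM hN i j h
    simp [Matrix.add_apply, hM i j h, hN i j h]
  zero_mem' := fun i j _ => rfl
  smul_mem' := by
    intro c M hM i j h
    simp [Matrix.smul_apply, hM i j h]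

/-- The matrices `!![0, a, x; a, a, y; 0, 0, 0]` (this is `F2·C ∨ 0`). -/
def SpaceW2 : Submodule (ZMod 2) (Matrix (Fin 3) (Fin 3) (ZMod 2)) where
  carrier := {M | ∃ a x y : ZMod 2, M = !![0, a, x; a, a, y; 0, 0, 0]}
  add_mem' := by
    rintro M N ⟨a, x, y, rfl⟩ ⟨a', x', y', rfl⟩
    exact ⟨a + a', x + x', y + y', by revert a x y a' x' y'; decide⟩
  zero_mem' := ⟨0, 0, 0, by decide⟩
  smul_mem' := by
    rintro k M ⟨a, x, y, rfl⟩
    exact ⟨k * a, k * x, k * y, by revert k a x y; decide⟩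

/-- The matrices `!![0, x, y; 0, 0, a; 0, a, a]` (this is `0 ∨ F2·C`). -/
def SpaceW3 : Submodule (ZMod 2) (Matrix (Fin 3) (Fin 3) (ZMod 2)) where
  carrier := {M | ∃ a x y : ZMod 2, M = !![0, x, y; 0, 0, a; 0, a, a]}
  add_mem' := by
    rintro M N ⟨a, x, y, rfl⟩ ⟨a', x', y', rfl⟩
    exact ⟨a + a', x + x', y + y', by revert a x y a' x' y'; decide⟩
  zero_mem' := ⟨0, 0, 0, by decide⟩
  smul_mem' := by
    rintro k M ⟨a, x, y, rfl⟩
    exact ⟨k * a, k * x, k * y, by revert k a x y; decide⟩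

/-! ### The three model spaces -/

lemma mem_NT3_iff (M : Matrix (Fin 3) (Fin 3) (ZMod 2)) :
    M ∈ NT3 ↔ ∃ a x y : ZMod 2, M = !![0, x, y; 0, 0, a; 0, 0, 0] := by
  constructor
  · intro h
    have h : ∀ i j : Fin 3, j ≤ i → M i j = 0 := h
    refine ⟨M 1 2, M 0 1, M 0 2, ?_⟩
    ext i j
    fin_cases i <;> fin_cases j <;> simp <;> exact h _ _ (by decide)
  · rintro ⟨a, x, y, rfl⟩
    intro i j hij
    fin_cases i <;> fin_cases j <;> first | rfl | exact absurd hij (by decide)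

lemma mem_W2_iff (M : Matrix (Fin 3) (Fin 3) (ZMod 2)) :
    M ∈ SpaceW2 ↔ ∃ a x y : ZMod 2, M = !![0, a, x; a, a, y; 0, 0, 0] := Iff.rfl

lemma mem_W3_iff (M : Matrix (Fin 3) (Fin 3) (ZMod 2)) :
    M ∈ SpaceW3 ↔ ∃ a x y : ZMod 2, M = !![0, x, y; 0, 0, a; 0, a, a] := Iff.rfl

/-- A subspace which is the image of an injective linear parametrization by three scalars has
dimension `3`. -/
lemma finrank_eq_three_of_param (W : Submodule (ZMod 2) (Matrix (Fin 3) (Fin 3) (ZMod 2)))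
    (f : (Fin 3 → ZMod 2) →ₗ[ZMod 2] Matrix (Fin 3) (Fin 3) (ZMod 2))
    (hf : Function.Injective f) (hW : ∀ M, M ∈ W ↔ ∃ v, M = f v) :
    Module.finrank (ZMod 2) W = 3 := by
  have : W = LinearMap.range f := by
    ext M
    rw [hW, LinearMap.mem_range]
    exact ⟨fun ⟨v, h⟩ => ⟨v, h.symm⟩, fun ⟨v, h⟩ => ⟨v, h.symm⟩⟩
  rw [this, LinearMap.finrank_range_of_inj hf]
  simp

lemma finrank_NT3 : Module.finrank (ZMod 2) NT3 = 3 := by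
  refine finrank_eq_three_of_param _
    { toFun := fun v => !![0, v 1, v 2; 0, 0, v 0; 0, 0, 0]
      map_add' := by decide
      map_smul' := by decide } (by unfold Function.Injective; decide) fun M => ?_
  rw [mem_NT3_iff]
  exact ⟨fun ⟨a, x, y, h⟩ => ⟨![a, x, y], h⟩, fun ⟨v, h⟩ => ⟨v 0, v 1, v 2, h⟩⟩

lemma finrank_W2 : Module.finrank (ZMod 2) SpaceW2 = 3 := by
  refine finrank_eq_three_of_param _
    { toFun := fun v => !![0, v 0, v 1; v 0, v 0, v 2; 0, 0, 0]
      map_add' := by decide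
      map_smul' := by decide } (by unfold Function.Injective; decide) fun M => ?_
  rw [mem_W2_iff]
  exact ⟨fun ⟨a, x, y, h⟩ => ⟨![a, x, y], h⟩, fun ⟨v, h⟩ => ⟨v 0, v 1, v 2, h⟩⟩

lemma finrank_W3 : Module.finrank (ZMod 2) SpaceW3 = 3 := by
  refine finrank_eq_three_of_param _
    { toFun := fun v => !![0, v 1, v 2; 0, 0, v 0; 0, v 0, v 0]
      map_add' := by decide
      map_smul' := by decide } (by unfold Function.Injective; decide) fun M => ?_
  rw [mem_W3_iff]
  exact ⟨fun ⟨a, x, y, h⟩ => ⟨![a, x, y], h⟩, fun ⟨v, h⟩ => ⟨v 0, v 1, v 2, h⟩⟩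

lemma trivialSpectrum_NT3 : TrivialSpectrum NT3 := by
  intro M hM
  obtain ⟨a, x, y, rfl⟩ := (mem_NT3_iff M).1 hM
  clear hM
  revert a x y
  decide

lemma trivialSpectrum_W2 : TrivialSpectrum SpaceW2 := by
  rintro M ⟨a, x, y, rfl⟩
  revert a x y
  decide

lemma trivialSpectrum_W3 : TrivialSpectrum SpaceW3 := by
  rintro M ⟨a, x, y, rfl⟩
  revert a x y
  decide

/-- The line spanned by the first basis vector, written as the vectors whose last two coordinates
vanish. -/
def firstLine : Submodule (ZMod 2) (Fin 3 → ZMod 2) where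
  carrier := {v | v 1 = 0 ∧ v 2 = 0}
  add_mem' := by rintro a b ⟨h1, h2⟩ ⟨h3, h4⟩; simp [h1, h2, h3, h4]
  zero_mem' := by simp
  smul_mem' := by rintro c a ⟨h1, h2⟩; simp [h1, h2]

/-- The plane spanned by the first two basis vectors. -/
def firstPlane : Submodule (ZMod 2) (Fin 3 → ZMod 2) where
  carrier := {v | v 2 = 0}
  add_mem' := by
    intro a b (h1 : _ = _) (h2 : _ = _)
    simp [h1, h2]
  zero_mem' := by simp
  smul_mem' := by
    intro c a (h1 : _ = _)
    simp [h1]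

lemma firstLine_ne_bot : firstLine ≠ ⊥ := by
  intro h
  have : (![1, 0, 0] : Fin 3 → ZMod 2) ∈ firstLine := ⟨rfl, rfl⟩
  rw [h, Submodule.mem_bot] at this
  revert this
  decide

lemma firstLine_ne_top : firstLine ≠ ⊤ := by
  intro h
  have : (![0, 0, 1] : Fin 3 → ZMod 2) ∈ firstLine := h ▸ Submodule.mem_top
  exact absurd this.2 (by decide)

lemma firstPlane_ne_bot : firstPlane ≠ ⊥ := by
  intro h
  have : (![1, 0, 0] : Fin 3 → ZMod 2) ∈ firstPlane := rfl
  rw [h, Submodule.mem_bot] at this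
  revert this
  decide

lemma firstPlane_ne_top : firstPlane ≠ ⊤ := by
  intro h
  have : (![0, 0, 1] : Fin 3 → ZMod 2) ∈ firstPlane := h ▸ Submodule.mem_top
  have h2 : (![0, 0, 1] : Fin 3 → ZMod 2) 2 = 0 := this
  revert h2
  decide

lemma reducible_NT3 : ¬ IrredMatSpace NT3 := by
  refine not_not.2 ⟨firstPlane, firstPlane_ne_bot, firstPlane_ne_top, ?_⟩
  intro M hM v _
  obtain ⟨a, x, y, rfl⟩ := (mem_NT3_iff M).1 hM
  change (_ : ZMod 2) = 0
  simp [Matrix.mulVec, dotProduct, Fin.sum_univ_three]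

lemma reducible_W2 : ¬ IrredMatSpace SpaceW2 := by
  refine not_not.2 ⟨firstPlane, firstPlane_ne_bot, firstPlane_ne_top, ?_⟩
  rintro M ⟨a, x, y, rfl⟩ v _
  change (_ : ZMod 2) = 0
  simp [Matrix.mulVec, dotProduct, Fin.sum_univ_three]

lemma reducible_W3 : ¬ IrredMatSpace SpaceW3 := by
  refine not_not.2 ⟨firstLine, firstLine_ne_bot, firstLine_ne_top, ?_⟩
  rintro M ⟨a, x, y, rfl⟩ v ⟨h1, h2⟩
  constructor <;> simp [Matrix.mulVec, dotProduct, Fin.sum_univ_three, h1, h2]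

/-! ### Non-similarity -/

/-- Every matrix of a space similar to `NT3` is nilpotent. -/
lemma cube_eq_zero_of_similar_NT3 {W : Submodule (ZMod 2) (Matrix (Fin 3) (Fin 3) (ZMod 2))}
    (h : MatSimilar NT3 W) {N : Matrix (Fin 3) (Fin 3) (ZMod 2)} (hN : N ∈ W) :
    N * N * N = 0 := by
  obtain ⟨P, hP, hW⟩ := h
  have hN' : N ∈ (W : Set _) := hN
  rw [hW] at hN'
  obtain ⟨M, hM, rfl⟩ := hN'
  have h1 : P⁻¹ * P = 1 := Matrix.nonsing_inv_mul _ ((Matrix.isUnit_iff_isUnit_det _).1 hP)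
  have h3 : M * M * M = 0 := by
    obtain ⟨a, x, y, rfl⟩ := (mem_NT3_iff M).1 hM
    clear hM hN
    revert a x y
    decide
  calc P * M * P⁻¹ * (P * M * P⁻¹) * (P * M * P⁻¹)
      = P * M * (P⁻¹ * P) * M * (P⁻¹ * P) * M * P⁻¹ := by simp only [Matrix.mul_assoc]
    _ = P * (M * M * M) * P⁻¹ := by rw [h1]; simp only [Matrix.mul_assoc, Matrix.one_mul]
    _ = 0 := by rw [h3]; simp

lemma not_similar_NT3_W2 : ¬ MatSimilar NT3 SpaceW2 := fun h =>
  absurd (cube_eq_zero_of_similar_NT3 h (N := !![0, 1, 0; 1, 1, 0; 0, 0, 0]) ⟨1, 0, 0, rfl⟩)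
    (by decide)

lemma not_similar_NT3_W3 : ¬ MatSimilar NT3 SpaceW3 := fun h =>
  absurd (cube_eq_zero_of_similar_NT3 h (N := !![0, 0, 0; 0, 0, 1; 0, 1, 1]) ⟨1, 0, 0, rfl⟩)
    (by decide)

lemma not_similar_W2_W3 : ¬ MatSimilar SpaceW2 SpaceW3 := by
  rintro ⟨P, hP, hW⟩
  have hdet := (Matrix.isUnit_iff_isUnit_det _).1 hP
  have h1 : P⁻¹ * P = 1 := Matrix.nonsing_inv_mul _ hdet
  have h2 : P * P⁻¹ = 1 := Matrix.mul_nonsing_inv _ hdet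
  -- The common kernel vector `e₁` of `SpaceW3` pulls back to one of `SpaceW2`.
  have key : ∀ M ∈ SpaceW2, M *ᵥ (P⁻¹ *ᵥ ![1, 0, 0]) = 0 := by
    intro M hM
    have hmem : P * M * P⁻¹ ∈ (SpaceW3 : Set (Matrix (Fin 3) (Fin 3) (ZMod 2))) := by
      rw [hW]; exact ⟨M, hM, rfl⟩
    have h0 : (P * M * P⁻¹) *ᵥ ![1, 0, 0] = 0 := by
      obtain ⟨a, x, y, h⟩ := hmem
      rw [h]
      clear h
      revert a x y
      decide
    have : P⁻¹ *ᵥ ((P * M * P⁻¹) *ᵥ ![1, 0, 0]) = 0 := by rw [h0]; simp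
    rwa [Matrix.mulVec_mulVec, Matrix.mul_assoc P, ← Matrix.mul_assoc, h1, Matrix.one_mul,
      ← Matrix.mulVec_mulVec] at this
  have hz : P⁻¹ *ᵥ (![1, 0, 0] : Fin 3 → ZMod 2) = 0 := by
    have ha := key !![0, 1, 0; 1, 1, 0; 0, 0, 0] ⟨1, 0, 0, rfl⟩
    have hb := key !![0, 0, 1; 0, 0, 0; 0, 0, 0] ⟨0, 1, 0, rfl⟩
    generalize P⁻¹ *ᵥ (![1, 0, 0] : Fin 3 → ZMod 2) = v at ha hb
    revert v
    decide
  have : P *ᵥ (P⁻¹ *ᵥ (![1, 0, 0] : Fin 3 → ZMod 2)) = 0 := by rw [hz]; simp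
  rw [Matrix.mulVec_mulVec, h2, Matrix.one_mulVec] at this
  revert this
  decide

/-! ### Reduction to block form -/

/-- Conjugating a `3`-dimensional space into another `3`-dimensional space is already a
similarity. -/
lemma similar_of_conj_mem {V W : Submodule (ZMod 2) (Matrix (Fin 3) (Fin 3) (ZMod 2))}
    (hV : Module.finrank (ZMod 2) V = 3) (hW : Module.finrank (ZMod 2) W = 3)
    (P P' : Matrix (Fin 3) (Fin 3) (ZMod 2)) (h : P * P' = 1)
    (hmem : ∀ M ∈ V, P * M * P' ∈ W) : MatSimilar V W := by
  have h' : P' * P = 1 := mul_eq_one_comm.1 h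
  have hinv : P⁻¹ = P' := Matrix.inv_eq_right_inv h
  let f : Matrix (Fin 3) (Fin 3) (ZMod 2) →ₗ[ZMod 2] Matrix (Fin 3) (Fin 3) (ZMod 2) :=
    { toFun := fun M => P * M * P'
      map_add' := by intro A B; simp [Matrix.mul_add, Matrix.add_mul]
      map_smul' := by intro c A; simp }
  have hf : Function.Injective f := by
    intro A B hAB
    have hAB : P * A * P' = P * B * P' := hAB
    have key : ∀ X : Matrix (Fin 3) (Fin 3) (ZMod 2), P' * (P * X * P') * P = X := by
      intro X
      calc P' * (P * X * P') * P = (P' * P) * X * (P' * P) := by simp only [Matrix.mul_assoc]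
        _ = X := by rw [h']; simp
    rw [← key A, ← key B, hAB]
  have hle : V.map f ≤ W := by
    rintro _ ⟨M, hM, rfl⟩
    exact hmem M hM
  have heq : V.map f = W := by
    apply Submodule.eq_of_le_of_finrank_eq hle
    exact (LinearEquiv.finrank_eq (V.equivMapOfInjective f hf)).symm.trans (hV.trans hW.symm)
  refine ⟨P, IsUnit.of_mul_eq_one _ h, ?_⟩
  rw [hinv, ← heq]
  rfl

lemma det_sub_one_ne_zero {V : Submodule (ZMod 2) (Matrix (Fin 3) (Fin 3) (ZMod 2))}
    (hV : TrivialSpectrum V) {M : Matrix (Fin 3) (Fin 3) (ZMod 2)} (hM : M ∈ V) :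
    (M - 1).det ≠ 0 := by
  intro h
  obtain ⟨v, hv, hv0⟩ := Matrix.exists_mulVec_eq_zero_iff.2 h
  refine hV M hM 1 v one_ne_zero hv ?_
  rw [Matrix.sub_mulVec, Matrix.one_mulVec, sub_eq_zero] at hv0
  simpa using hv0

lemma det_conj_sub_one {P P' M : Matrix (Fin 3) (Fin 3) (ZMod 2)} (h : P * P' = 1) :
    (P * M * P' - 1).det = (M - 1).det := by
  have : P * M * P' - 1 = P * (M - 1) * P' := by
    rw [Matrix.mul_sub, Matrix.sub_mul, Matrix.mul_one, h]
  rw [this, Matrix.det_mul, Matrix.det_mul, mul_right_comm, ← Matrix.det_mul, h, Matrix.det_one,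
    one_mul]

/-- A nonzero vector can be moved to the first basis vector. -/
lemma exists_basis_change (x : Fin 3 → ZMod 2) (hx : x ≠ 0) :
    ∃ P P' : Matrix (Fin 3) (Fin 3) (ZMod 2), P * P' = 1 ∧ P' *ᵥ ![1, 0, 0] = x := by
  have h01 : ∀ a : ZMod 2, a = 0 ∨ a = 1 := by decide
  obtain ⟨a, b, c, rfl⟩ : ∃ a b c, x = ![a, b, c] :=
    ⟨x 0, x 1, x 2, by ext i; fin_cases i <;> rfl⟩
  rcases h01 a with rfl | rfl
  · rcases h01 b with rfl | rfl
    · rcases h01 c with rfl | rfl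
      · exact absurd (by decide) hx
      · exact ⟨!![0, 0, 1; 0, 1, 0; 1, 0, 0], !![0, 0, 1; 0, 1, 0; 1, 0, 0], by decide, by decide⟩
    · exact ⟨!![0, 1, 0; 1, 0, 0; 0, c, 1], !![0, 1, 0; 1, 0, 0; c, 0, 1],
        by revert c; decide, by revert c; decide⟩
  · exact ⟨!![1, 0, 0; b, 1, 0; c, 0, 1], !![1, 0, 0; b, 1, 0; c, 0, 1],
      by revert b c; decide, by revert b c; decide⟩

/-- A reducible space of trivial spectrum kills a nonzero vector, on the right or on the left. -/
lemma exists_kernel {V : Submodule (ZMod 2) (Matrix (Fin 3) (Fin 3) (ZMod 2))}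
    (hV : TrivialSpectrum V) (hred : ¬ IrredMatSpace V) :
    (∃ x : Fin 3 → ZMod 2, x ≠ 0 ∧ ∀ M ∈ V, M *ᵥ x = 0) ∨
    (∃ f : Fin 3 → ZMod 2, f ≠ 0 ∧ ∀ M ∈ V, f ᵥ* M = 0) := by
  obtain ⟨F, hbot, htop, hF⟩ := not_not.1 hred
  have h01 : ∀ a : ZMod 2, a = 0 ∨ a = 1 := by decide
  have hlt : Module.finrank (ZMod 2) F < 3 := by
    simpa using Submodule.finrank_lt htop
  have hpos : 0 < Module.finrank (ZMod 2) F := by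
    rw [Nat.pos_iff_ne_zero, Ne, Submodule.finrank_eq_zero]
    exact hbot
  obtain h1 | h2 : Module.finrank (ZMod 2) F = 1 ∨ Module.finrank (ZMod 2) F = 2 := by omega
  · left
    obtain ⟨⟨x, hxF⟩, hx, hspan⟩ := finrank_eq_one_iff'.1 h1
    have hx0 : x ≠ 0 := fun h => hx (Subtype.ext h)
    refine ⟨x, hx0, fun M hM => ?_⟩
    obtain ⟨c, hc⟩ := hspan ⟨M *ᵥ x, hF M hM x hxF⟩
    have hc : c • x = M *ᵥ x := congrArg Subtype.val hc
    rcases h01 c with rfl | rfl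
    · rw [← hc, zero_smul]
    · exact absurd hc.symm (hV M hM 1 x one_ne_zero hx0)
  · right
    obtain ⟨φ, hφ, hle⟩ := Submodule.exists_le_ker_of_lt_top F (lt_top_iff_ne_top.2 htop)
    have hker : F = LinearMap.ker φ := by
      apply Submodule.eq_of_le_of_finrank_le hle
      have hlt' : Module.finrank (ZMod 2) (LinearMap.ker φ) < 3 := by
        simpa using Submodule.finrank_lt (s := LinearMap.ker φ)
          (fun h => hφ (LinearMap.ker_eq_top.1 h))
      omega
    obtain ⟨f, hf⟩ : ∃ f : Fin 3 → ZMod 2, ∀ v, φ v = f ⬝ᵥ v := by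
      refine ⟨fun i => φ (Pi.single i 1), fun v => ?_⟩
      conv_lhs => rw [pi_eq_sum_univ' v]
      simp [dotProduct, mul_comm]
    have hf0 : f ≠ 0 := by
      rintro rfl
      exact hφ (LinearMap.ext fun v => by simp [hf])
    refine ⟨f, hf0, fun M hM => ?_⟩
    have hinv : ∀ v, f ⬝ᵥ v = 0 → (f ᵥ* M) ⬝ᵥ v = 0 := by
      intro v hv
      have : v ∈ F := by rw [hker, LinearMap.mem_ker, hf, hv]
      have := hF M hM v this
      rwa [hker, LinearMap.mem_ker, hf, Matrix.dotProduct_mulVec] at this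
    -- A functional vanishing on the kernel of `f` is a multiple of `f`.
    have hmul : ∀ f g : Fin 3 → ZMod 2, (∀ v, f ⬝ᵥ v = 0 → g ⬝ᵥ v = 0) → g = 0 ∨ g = f := by
      decide
    rcases hmul _ _ hinv with h | h
    · exact h
    · refine absurd (Matrix.exists_vecMul_eq_zero_iff.1 ⟨f, hf0, ?_⟩) (det_sub_one_ne_zero hV hM)
      rw [Matrix.vecMul_sub, h, Matrix.vecMul_one, sub_self]

/-! ### Normal form of the `2 × 2` blocks -/

/-- Nonzero `2 × 2` matrices over `F2` without the eigenvalue `1` are conjugate to `E₁₂` or `C`. -/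
lemma exists_conj_normal (A : Matrix (Fin 2) (Fin 2) (ZMod 2)) (hA : A ≠ 0)
    (hdet : (A - 1).det ≠ 0) :
    ∃ Q Q' : Matrix (Fin 2) (Fin 2) (ZMod 2), Q * Q' = 1 ∧
      (Q * A * Q' = !![0, 1; 0, 0] ∨ Q * A * Q' = !![0, 1; 1, 1]) := by
  have key : ∀ a b c d : ZMod 2, !![a, b; c, d] ≠ 0 → (a - 1) * (d - 1) - b * c ≠ 0 →
      ∃ Q ∈ ([!![1, 0; 0, 1], !![0, 1; 1, 0], !![1, 1; 0, 1], !![1, 0; 1, 1], !![0, 1; 1, 1],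
          !![1, 1; 1, 0]] : List (Matrix (Fin 2) (Fin 2) (ZMod 2))),
      ∃ Q' ∈ ([!![1, 0; 0, 1], !![0, 1; 1, 0], !![1, 1; 0, 1], !![1, 0; 1, 1], !![0, 1; 1, 1],
          !![1, 1; 1, 0]] : List (Matrix (Fin 2) (Fin 2) (ZMod 2))), Q * Q' = 1 ∧
      (Q * !![a, b; c, d] * Q' = !![0, 1; 0, 0] ∨
        Q * !![a, b; c, d] * Q' = !![0, 1; 1, 1]) := by
    decide
  rw [Matrix.eta_fin_two A] at hA ⊢
  obtain ⟨Q, -, Q', -, h⟩ := key _ _ _ _ hA (by simpa [Matrix.det_fin_two] using hdet)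
  exact ⟨Q, Q', h⟩

set_option synthInstance.maxHeartbeats 200000 in
set_option synthInstance.maxSize 2000 in
/-- Two distinct nonzero `2 × 2` matrices over `F2` together with their sum cannot all avoid the
eigenvalue `1`. -/
lemma block_unique (A B : Matrix (Fin 2) (Fin 2) (ZMod 2)) (hA : A ≠ 0)
    (h1 : (A - 1).det ≠ 0) (h2 : (B - 1).det ≠ 0) (h3 : (A + B - 1).det ≠ 0) :
    B = 0 ∨ B = A := by
  have key : ∀ a b c d a' b' c' d' : ZMod 2, !![a, b; c, d] ≠ 0 →
      (a - 1) * (d - 1) - b * c ≠ 0 → (a' - 1) * (d' - 1) - b' * c' ≠ 0 →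
      (a + a' - 1) * (d + d' - 1) - (b + b') * (c + c') ≠ 0 →
      !![a', b'; c', d'] = 0 ∨ !![a', b'; c', d'] = !![a, b; c, d] := by
    decide
  rw [Matrix.det_fin_two] at h1 h2 h3
  rw [Matrix.eta_fin_two A] at hA ⊢
  rw [Matrix.eta_fin_two B]
  exact key _ _ _ _ _ _ _ _ hA (by simpa using h1) (by simpa using h2) (by simpa using h3)

/-- The blocks of a linear space, all without the eigenvalue `1`, are simultaneously conjugate into
the line spanned by `E₁₂` or into the one spanned by `C`. -/
lemma block_normal_form (U : Submodule (ZMod 2) (Matrix (Fin 2) (Fin 2) (ZMod 2)))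
    (hU : ∀ A ∈ U, (A - 1).det ≠ 0) :
    ∃ Q Q' : Matrix (Fin 2) (Fin 2) (ZMod 2), Q * Q' = 1 ∧
      ((∀ A ∈ U, ∃ a, Q * A * Q' = !![0, a; 0, 0]) ∨
        (∀ A ∈ U, ∃ a, Q * A * Q' = !![0, a; a, a])) := by
  by_cases h : ∀ A ∈ U, A = 0
  · exact ⟨1, 1, by simp, Or.inl fun A hA => ⟨0, by rw [h A hA]; decide⟩⟩
  · push Not at h
    obtain ⟨A, hA, hA0⟩ := h
    obtain ⟨Q, Q', hQ, hQA⟩ := exists_conj_normal A hA0 (hU A hA)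
    have hB : ∀ B ∈ U, B = 0 ∨ B = A := fun B hB =>
      block_unique A B hA0 (hU A hA) (hU B hB) (hU _ (U.add_mem hA hB))
    refine ⟨Q, Q', hQ, hQA.imp (fun hn B hBU => ?_) (fun hn B hBU => ?_)⟩
    all_goals
      rcases hB B hBU with rfl | rfl
      · exact ⟨0, by rw [Matrix.mul_zero, Matrix.zero_mul]; decide⟩
      · exact ⟨1, hn⟩

/-! ### Classification -/

/-- The linear map `M ↦ e (P M P')`, where `e` extracts the `2 × 2` block on the rows and columns
selected by `s`. -/
def conjBlock (P P' : Matrix (Fin 3) (Fin 3) (ZMod 2)) (s : Fin 2 → Fin 3) :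
    Matrix (Fin 3) (Fin 3) (ZMod 2) →ₗ[ZMod 2] Matrix (Fin 2) (Fin 2) (ZMod 2) where
  toFun M := (P * M * P').submatrix s s
  map_add' A B := by rw [Matrix.mul_add, Matrix.add_mul]; rfl
  map_smul' c A := by rw [Matrix.mul_smul, Matrix.smul_mul]; rfl

/-- The block matrix `1 ⊕ Q`. -/
def lowerEmbed (Q : Matrix (Fin 2) (Fin 2) (ZMod 2)) : Matrix (Fin 3) (Fin 3) (ZMod 2) :=
  !![1, 0, 0; 0, Q 0 0, Q 0 1; 0, Q 1 0, Q 1 1]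

/-- The block matrix `Q ⊕ 1`. -/
def upperEmbed (Q : Matrix (Fin 2) (Fin 2) (ZMod 2)) : Matrix (Fin 3) (Fin 3) (ZMod 2) :=
  !![Q 0 0, Q 0 1, 0; Q 1 0, Q 1 1, 0; 0, 0, 1]

lemma lowerEmbed_mul (Q R : Matrix (Fin 2) (Fin 2) (ZMod 2)) :
    lowerEmbed Q * lowerEmbed R = lowerEmbed (Q * R) := by
  ext i j
  fin_cases i <;> fin_cases j <;>
    simp [lowerEmbed, Matrix.mul_apply, Fin.sum_univ_three, Fin.sum_univ_two]

lemma upperEmbed_mul (Q R : Matrix (Fin 2) (Fin 2) (ZMod 2)) :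
    upperEmbed Q * upperEmbed R = upperEmbed (Q * R) := by
  ext i j
  fin_cases i <;> fin_cases j <;>
    simp [upperEmbed, Matrix.mul_apply, Fin.sum_univ_three, Fin.sum_univ_two]

lemma lowerEmbed_one : lowerEmbed 1 = 1 := by decide

lemma upperEmbed_one : upperEmbed 1 = 1 := by decide

/-- Conjugation by `1 ⊕ Q` of a matrix with vanishing first column conjugates its lower block
by `Q`. -/
lemma lowerEmbed_conj (Q Q' : Matrix (Fin 2) (Fin 2) (ZMod 2))
    (N : Matrix (Fin 3) (Fin 3) (ZMod 2)) (hN : ∀ i, N i 0 = 0) :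
    ∃ x y, ∀ B, Q * N.submatrix ![1, 2] ![1, 2] * Q' = B →
      lowerEmbed Q * N * lowerEmbed Q' = !![0, x, y; 0, B 0 0, B 0 1; 0, B 1 0, B 1 1] := by
  refine ⟨(lowerEmbed Q * N * lowerEmbed Q') 0 1, (lowerEmbed Q * N * lowerEmbed Q') 0 2, ?_⟩
  rintro B rfl
  ext i j
  fin_cases i <;> fin_cases j <;>
    simp only [Matrix.mul_apply, Fin.sum_univ_three, Fin.sum_univ_two,
      Matrix.submatrix_apply] <;>
    simp [lowerEmbed, hN]

/-- Conjugation by `Q ⊕ 1` of a matrix with vanishing last row conjugates its upper block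
by `Q`. -/
lemma upperEmbed_conj (Q Q' : Matrix (Fin 2) (Fin 2) (ZMod 2))
    (N : Matrix (Fin 3) (Fin 3) (ZMod 2)) (hN : ∀ j, N 2 j = 0) :
    ∃ x y, ∀ B, Q * N.submatrix ![0, 1] ![0, 1] * Q' = B →
      upperEmbed Q * N * upperEmbed Q' = !![B 0 0, B 0 1, x; B 1 0, B 1 1, y; 0, 0, 0] := by
  refine ⟨(upperEmbed Q * N * upperEmbed Q') 0 2, (upperEmbed Q * N * upperEmbed Q') 1 2, ?_⟩
  rintro B rfl
  ext i j
  fin_cases i <;> fin_cases j <;>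
    simp only [Matrix.mul_apply, Fin.sum_univ_three, Fin.sum_univ_two,
      Matrix.submatrix_apply] <;>
    simp [upperEmbed, hN]

lemma classification_of_kernel {V : Submodule (ZMod 2) (Matrix (Fin 3) (Fin 3) (ZMod 2))}
    (hV : TrivialSpectrum V) (hdim : Module.finrank (ZMod 2) V = 3)
    {x : Fin 3 → ZMod 2} (hx : x ≠ 0) (hker : ∀ M ∈ V, M *ᵥ x = 0) :
    MatSimilar V NT3 ∨ MatSimilar V SpaceW3 := by
  obtain ⟨P, P', hP, hPx⟩ := exists_basis_change x hx
  have hcol : ∀ M ∈ V, ∀ i, (P * M * P') i 0 = 0 := by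
    intro M hM i
    have h : (P * M * P') *ᵥ ![1, 0, 0] = 0 := by
      rw [← Matrix.mulVec_mulVec, hPx, ← Matrix.mulVec_mulVec, hker M hM, Matrix.mulVec_zero]
    have := congrFun h i
    simpa [Matrix.mulVec, dotProduct, Fin.sum_univ_three] using this
  obtain ⟨Q, Q', hQ, hform⟩ := block_normal_form (V.map (conjBlock P P' ![1, 2])) (by
    rintro _ ⟨M, hM, rfl⟩
    have hd := det_sub_one_ne_zero hV hM
    rw [← det_conj_sub_one hP, Matrix.det_fin_three] at hd
    intro h0
    rw [Matrix.det_fin_two] at h0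
    apply hd
    simp only [conjBlock, LinearMap.coe_mk, AddHom.coe_mk, Matrix.sub_apply,
      Matrix.submatrix_apply, hcol M hM] at h0 ⊢
    simp at h0 ⊢
    linear_combination h0)
  have hinv : lowerEmbed Q * P * (P' * lowerEmbed Q') = 1 := by
    rw [Matrix.mul_assoc, ← Matrix.mul_assoc P, hP, Matrix.one_mul, lowerEmbed_mul, hQ,
      lowerEmbed_one]
  have hassoc : ∀ M, lowerEmbed Q * P * M * (P' * lowerEmbed Q') =
      lowerEmbed Q * (P * M * P') * lowerEmbed Q' := fun M => by simp only [Matrix.mul_assoc]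
  refine hform.imp (fun hf => ?_) (fun hf => ?_)
  · refine similar_of_conj_mem hdim finrank_NT3 _ _ hinv fun M hM => ?_
    obtain ⟨a, ha⟩ := hf _ ⟨M, hM, rfl⟩
    obtain ⟨x, y, hxy⟩ := lowerEmbed_conj Q Q' (P * M * P') (hcol M hM)
    rw [hassoc, hxy _ ha, mem_NT3_iff]
    exact ⟨a, x, y, rfl⟩
  · refine similar_of_conj_mem hdim finrank_W3 _ _ hinv fun M hM => ?_
    obtain ⟨a, ha⟩ := hf _ ⟨M, hM, rfl⟩
    obtain ⟨x, y, hxy⟩ := lowerEmbed_conj Q Q' (P * M * P') (hcol M hM)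
    rw [hassoc, hxy _ ha]
    exact ⟨a, x, y, rfl⟩

lemma classification_of_left_kernel {V : Submodule (ZMod 2) (Matrix (Fin 3) (Fin 3) (ZMod 2))}
    (hV : TrivialSpectrum V) (hdim : Module.finrank (ZMod 2) V = 3)
    {f : Fin 3 → ZMod 2} (hf0 : f ≠ 0) (hker : ∀ M ∈ V, f ᵥ* M = 0) :
    MatSimilar V NT3 ∨ MatSimilar V SpaceW2 := by
  -- A matrix with last row `f`: transpose a change of basis for `f`, then reverse the order.
  obtain ⟨P, P', hP, hPf⟩ : ∃ P P' : Matrix (Fin 3) (Fin 3) (ZMod 2),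
      P * P' = 1 ∧ ![0, 0, 1] ᵥ* P = f := by
    obtain ⟨R, R', hR, hRf⟩ := exists_basis_change f hf0
    have hJ : (!![0, 0, 1; 0, 1, 0; 1, 0, 0] : Matrix (Fin 3) (Fin 3) (ZMod 2)) *
      !![0, 0, 1; 0, 1, 0; 1, 0, 0] = 1 := by decide
    refine ⟨!![0, 0, 1; 0, 1, 0; 1, 0, 0] * R'ᵀ, Rᵀ * !![0, 0, 1; 0, 1, 0; 1, 0, 0], ?_, ?_⟩
    · rw [Matrix.mul_assoc, ← Matrix.mul_assoc _ Rᵀ, ← Matrix.transpose_mul, hR,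
        Matrix.transpose_one, Matrix.one_mul, hJ]
    · rw [← Matrix.vecMul_vecMul, Matrix.vecMul_transpose, ← hRf]
      congr 1
      decide
  have hrow : ∀ M ∈ V, ∀ j, (P * M * P') 2 j = 0 := by
    intro M hM j
    have h : ![0, 0, 1] ᵥ* (P * M * P') = 0 := by
      rw [← Matrix.vecMul_vecMul, ← Matrix.vecMul_vecMul, hPf, hker M hM, Matrix.zero_vecMul]
    have := congrFun h j
    simpa [Matrix.vecMul, dotProduct, Fin.sum_univ_three] using this
  obtain ⟨Q, Q', hQ, hform⟩ := block_normal_form (V.map (conjBlock P P' ![0, 1])) (by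
    rintro _ ⟨M, hM, rfl⟩
    have hd := det_sub_one_ne_zero hV hM
    rw [← det_conj_sub_one hP, Matrix.det_fin_three] at hd
    intro h0
    rw [Matrix.det_fin_two] at h0
    apply hd
    simp only [conjBlock, LinearMap.coe_mk, AddHom.coe_mk, Matrix.sub_apply,
      Matrix.submatrix_apply, hrow M hM] at h0 ⊢
    simp at h0 ⊢
    linear_combination h0)
  have hinv : upperEmbed Q * P * (P' * upperEmbed Q') = 1 := by
    rw [Matrix.mul_assoc, ← Matrix.mul_assoc P, hP, Matrix.one_mul, upperEmbed_mul, hQ,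
      upperEmbed_one]
  have hassoc : ∀ M, upperEmbed Q * P * M * (P' * upperEmbed Q') =
      upperEmbed Q * (P * M * P') * upperEmbed Q' := fun M => by simp only [Matrix.mul_assoc]
  refine hform.imp (fun hf => ?_) (fun hf => ?_)
  · refine similar_of_conj_mem hdim finrank_NT3 _ _ hinv fun M hM => ?_
    obtain ⟨a, ha⟩ := hf _ ⟨M, hM, rfl⟩
    obtain ⟨x, y, hxy⟩ := upperEmbed_conj Q Q' (P * M * P') (hrow M hM)
    rw [hassoc, hxy _ ha, mem_NT3_iff]
    exact ⟨y, a, x, rfl⟩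
  · refine similar_of_conj_mem hdim finrank_W2 _ _ hinv fun M hM => ?_
    obtain ⟨a, ha⟩ := hf _ ⟨M, hM, rfl⟩
    obtain ⟨x, y, hxy⟩ := upperEmbed_conj Q Q' (P * M * P') (hrow M hM)
    rw [hassoc, hxy _ ha]
    exact ⟨a, x, y, rfl⟩

theorem classification_of_reducible_trivial_spectrum_spaces :
    (TrivialSpectrum NT3 ∧ ¬ IrredMatSpace NT3 ∧
      Module.finrank (ZMod 2) NT3 = 3) ∧
    (TrivialSpectrum SpaceW2 ∧ ¬ IrredMatSpace SpaceW2 ∧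
      Module.finrank (ZMod 2) SpaceW2 = 3) ∧
    (TrivialSpectrum SpaceW3 ∧ ¬ IrredMatSpace SpaceW3 ∧
      Module.finrank (ZMod 2) SpaceW3 = 3) ∧
    (¬ MatSimilar NT3 SpaceW2 ∧ ¬ MatSimilar NT3 SpaceW3 ∧
      ¬ MatSimilar SpaceW2 SpaceW3) ∧
    ∀ V : Submodule (ZMod 2) (Matrix (Fin 3) (Fin 3) (ZMod 2)),
      TrivialSpectrum V → ¬ IrredMatSpace V → Module.finrank (ZMod 2) V = 3 →
      MatSimilar V NT3 ∨ MatSimilar V SpaceW2 ∨ MatSimilar V SpaceW3 := by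
  refine ⟨⟨trivialSpectrum_NT3, reducible_NT3, finrank_NT3⟩,
    ⟨trivialSpectrum_W2, reducible_W2, finrank_W2⟩,
    ⟨trivialSpectrum_W3, reducible_W3, finrank_W3⟩,
    ⟨not_similar_NT3_W2, not_similar_NT3_W3, not_similar_W2_W3⟩, fun V hV hred hdim => ?_⟩
  rcases exists_kernel hV hred with ⟨x, hx, hker⟩ | ⟨f, hf, hker⟩
  · exact (classification_of_kernel hV hdim hx hker).imp_right Or.inr
  · exact (classification_of_left_kernel hV hdim hf hker).imp_right Or.inl
end

section
/- Up to equivalence, there are exactly five 3-dimensional affine subspaces of the 3×3 matrices over F2 that consist entirely of invertible matrices, namely the affine subspaces I3 + H where H is one of the following five linear subspaces: the strictly upper-triangular 3×3 matrices over F2; {[[0,a,x],[a,a,y],[0,0,0]] : a,x,y ∈ F2}; {[[0,x,y],[0,0,a],[0,a,a]] : a,x,y ∈ F2}; T1 = {[[a,b,a],[a,a,c],[b+c,a,a]] : a,b,c ∈ F2}; and T2 = {[[a,b,a],[a,a,c],[0,a,a]] : a,b,c ∈ F2}. That is, each of these five affine subspaces is 3-dimensional and contained in GL3(F2), they are pairwise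 inequivalent, and every 3-dimensional affine subspace of the 3×3 matrices over F2 contained in GL3(F2) is equivalent to one of them. -/
/-!
Equivalence classes are reduced to a short finite enumeration.

*Inequivalence.* Equivalence acts on translation spaces by `M ↦ P M Q`, so it preserves whether the
translation space has a common kernel vector, has a common left kernel vector, and contains a
matrix of rank one (`AffEquiv.rKer`, `AffEquiv.lKer`, `AffEquiv.hasRankOne`). These three properties
separate the five spaces (`affEquiv_tspace`).

*Completeness.* Multiplying by the inverse of an element turns the affine space into `1 + H`, where
no element of `H` has eigenvalue `1`. A `3 × 3` matrix over `F2` without eigenvalue `1` is either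
square-zero or cyclic (`nil_or_cyclic`). A space of square-zero matrices has dimension at most `2`
(`exists_not_nil`), so `H` contains a cyclic matrix; conjugating by its Krylov matrix, `H` contains
one of four companion matrices. Only `36` spaces `H` contain one of these, and `cases3` lists them
with an explicit equivalence of `1 + H` to one of the five models (`cases3_complete`,
`cases3_sound`). The enumerations run in the kernel on matrices coded as numbers below `512`, with
`xor` as addition.
-/

open Matrix

/-- Two affine subspaces of square matrices (given as sets) are *equivalent* when one is
obtained from the other by multiplying on the left and on the right by fixed invertible
matrices. -/
def AffEquiv (S₁ S₂ : Set (Matrix (Fin 3) (Fin 3) (ZMod 2))) : Prop :=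
  ∃ P Q : Matrix (Fin 3) (Fin 3) (ZMod 2), IsUnit P ∧ IsUnit Q ∧
    S₂ = (fun M => P * M * Q) '' S₁

/-- A set of matrices is a 3-dimensional affine subspace when it is a coset of a
3-dimensional linear subspace. -/
def IsAffine3 (S : Set (Matrix (Fin 3) (Fin 3) (ZMod 2))) : Prop :=
  ∃ (A : Matrix (Fin 3) (Fin 3) (ZMod 2))
    (H : Submodule (ZMod 2) (Matrix (Fin 3) (Fin 3) (ZMod 2))),
    Module.finrank (ZMod 2) H = 3 ∧ S = (fun M => A + M) '' (H : Set (Matrix (Fin 3) (Fin 3) (ZMod 2)))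

/-- The coset `I₃ + H` of a linear subspace `H`. -/
def affOf (H : Submodule (ZMod 2) (Matrix (Fin 3) (Fin 3) (ZMod 2))) :
    Set (Matrix (Fin 3) (Fin 3) (ZMod 2)) :=
  (fun M => 1 + M) '' (H : Set (Matrix (Fin 3) (Fin 3) (ZMod 2)))

/-- The five translation spaces of the classification. -/
def transList : List (Submodule (ZMod 2) (Matrix (Fin 3) (Fin 3) (ZMod 2))) :=
  [NT3, SpaceW2, SpaceW3, SpaceT1, SpaceT2]

/-- The `3 × 3` matrices over `F2`. -/
abbrev Mat := Matrix (Fin 3) (Fin 3) (ZMod 2)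

/-! ### Numerical codes of matrices -/

/-- The matrix with code `n`: its entry `(i, j)` is the binary digit of `n` at place `3 i + j`.
Codes below `512` name every matrix once, and matrix addition becomes bitwise `xor`. -/
def dec (n : ℕ) : Mat := fun i j => if n.testBit (3 * i + j) then 1 else 0

lemma dec_zero : dec 0 = 0 := by
  ext i j; simp [dec]

lemma dec_xor (m n : ℕ) : dec (m ^^^ n) = dec m + dec n := by
  ext i j
  simp only [dec, Nat.testBit_xor, Matrix.add_apply]
  cases m.testBit (3 * i + j) <;> cases n.testBit (3 * i + j) <;> decide

lemma dec_inj {m n : ℕ} (hm : m < 512) (hn : n < 512) (h : dec m = dec n) : m = n := by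
  have hk : ∀ i j : Fin 3, m.testBit (3 * i + j) = n.testBit (3 * i + j) := by
    intro i j
    have := congrFun (congrFun h i) j
    simp only [dec] at this
    revert this
    cases m.testBit (3 * i + j) <;> cases n.testBit (3 * i + j) <;> decide
  apply Nat.eq_of_testBit_eq
  intro k
  by_cases hk9 : k < 9
  · have := hk ⟨k / 3, by omega⟩ ⟨k % 3, by omega⟩
    simpa [Nat.div_add_mod] using this
  · have h512 : 512 ≤ 2 ^ k := by
      calc 512 = 2 ^ 9 := by norm_num
        _ ≤ 2 ^ k := Nat.pow_le_pow_right (by norm_num) (by omega)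
    rw [Nat.testBit_lt_two_pow (by omega), Nat.testBit_lt_two_pow (by omega)]

lemma exists_dec (M : Mat) : ∃ n < 512, dec n = M := by
  have hb : Function.Bijective (fun n : Fin 512 => dec n) := by
    rw [Fintype.bijective_iff_injective_and_card]
    refine ⟨fun a b h => Fin.ext (dec_inj a.2 b.2 h), ?_⟩
    change _ = Fintype.card (Fin 3 → Fin 3 → ZMod 2); simp [ZMod.card]
  obtain ⟨n, hn⟩ := hb.2 M
  exact ⟨n, n.2, hn⟩

/-- For `n < 512`, bit `n` is set exactly when `1 + dec n` is invertible. -/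
def okMask : ℕ :=
  5530720622310981199049019556527130139634849767204913079744425902712644823531119917533094727823542160186690052826696094755242064475458110281129942019250517

lemma isUnit_iff_det (M : Mat) : IsUnit M ↔ M.det = 1 := by
  rw [Matrix.isUnit_iff_isUnit_det, isUnit_iff_ne_zero]
  generalize M.det = d
  revert d; decide

set_option maxRecDepth 100000 in
lemma okMask_spec : ∀ n < 512, (1 + dec n).det = 1 → okMask.testBit n = true := by
  simp only [Matrix.det_fin_three]
  decide +kernel

/-- Codes of the square-zero matrices. -/
def nilCodes : List ℕ :=
  [0, 2, 4, 6, 8, 27, 32, 36, 40, 63, 64, 72, 128, 130, 192, 219, 325, 365, 432, 438, 455, 504]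

/-- The matrix with columns `v`, `X v`, `X² v`. -/
def krylov (X : Mat) (v : Fin 3 → ZMod 2) : Mat :=
  (Matrix.of ![v, X *ᵥ v, X *ᵥ (X *ᵥ v)])ᵀ

/-- Codes of the companion matrices of the four cubics over `F2` that do not vanish at `1`. -/
def compCodes : List ℕ := [136, 172, 396, 424]

set_option maxRecDepth 100000 in
set_option synthInstance.maxHeartbeats 400000 in
set_option synthInstance.maxSize 4096 in
/-- A matrix without eigenvalue `1` is square-zero or has a cyclic vector, and then its Krylov matrix
conjugates it to a companion matrix. -/
lemma nil_or_cyclic : ∀ n < 512, okMask.testBit n = true → n ∈ nilCodes ∨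
    ∃ v : Fin 3 → ZMod 2, (krylov (dec n) v).det = 1 ∧
      ∃ r ∈ compCodes, dec n * krylov (dec n) v = krylov (dec n) v * dec r := by
  simp only [Matrix.det_fin_three]
  decide +kernel

set_option maxRecDepth 100000 in
/-- Three matrices that span a space of square-zero matrices are linearly dependent. -/
lemma nil_dependent : ∀ a ∈ nilCodes, ∀ b ∈ nilCodes, a ^^^ b ∈ nilCodes →
    ∀ c ∈ nilCodes, c ^^^ a ∈ nilCodes → c ^^^ b ∈ nilCodes → c ^^^ (a ^^^ b) ∈ nilCodes →
      a = 0 ∨ b = 0 ∨ b = a ∨ c = 0 ∨ c = a ∨ c = b ∨ c = a ^^^ b := by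
  decide +kernel

/-! ### Spaces containing a companion matrix -/

/-- The five translation spaces parametrised by their three free entries. -/
def par : Fin 5 → ZMod 2 → ZMod 2 → ZMod 2 → Mat
  | 0, a, b, c => !![0, a, b; 0, 0, c; 0, 0, 0]
  | 1, a, b, c => !![0, a, b; a, a, c; 0, 0, 0]
  | 2, a, b, c => !![0, b, c; 0, 0, a; 0, a, a]
  | 3, a, b, c => !![a, b, a; a, a, c; b + c, a, a]
  | 4, a, b, c => !![a, b, a; a, a, c; 0, a, a]

/-- The entries of `transList`, indexed as in `par`. -/
def tspace : Fin 5 → Submodule (ZMod 2) Mat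
  | 0 => NT3
  | 1 => SpaceW2
  | 2 => SpaceW3
  | 3 => SpaceT1
  | 4 => SpaceT2

/-- For a companion matrix with code `r`, the spaces `H` of dimension `3` that contain it and satisfy
`1 + H ⊆ GL₃(F2)`. An entry `(t, m, n, p, q)` stands for the space with basis `r, m, n`; the map
`M ↦ p M q` carries its coset of `1` to that of `tspace t`. -/
def cases3 (r : ℕ) : List (Fin 5 × ℕ × ℕ × ℕ × ℕ) :=
  if r = 136 then
    [(4, 6, 34, 275, 311), (4, 6, 363, 403, 207), (0, 8, 64, 84, 84), (4, 8, 355, 84, 212),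
      (4, 8, 371, 84, 84), (3, 12, 371, 84, 84), (4, 34, 72, 94, 372), (4, 34, 335, 370, 501),
      (4, 36, 335, 482, 157), (4, 58, 72, 94, 500), (3, 58, 77, 95, 244), (3, 58, 332, 94, 500),
      (3, 62, 333, 85, 340)]
  else if r = 172 then
    [(4, 6, 34, 275, 311), (4, 6, 72, 401, 492), (4, 36, 335, 482, 157), (4, 40, 72, 110, 428),
      (4, 40, 95, 369, 345), (4, 44, 91, 213, 342), (4, 44, 327, 169, 481)]
  else if r = 396 then
    [(4, 2, 36, 275, 275), (4, 2, 192, 156, 102), (4, 36, 75, 482, 143), (4, 40, 72, 110, 444),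
      (4, 40, 75, 377, 369), (4, 58, 72, 395, 474), (4, 58, 192, 241, 489)]
  else
    [(4, 2, 36, 275, 275), (4, 2, 109, 188, 103), (1, 8, 64, 86, 212), (3, 12, 71, 303, 286),
      (3, 26, 109, 190, 355), (2, 30, 197, 241, 489), (4, 36, 75, 482, 143), (3, 38, 75, 188, 103),
      (3, 38, 194, 156, 102)]

/-- Codes of the eight elements of the span of `dec r`, `dec m`, `dec n`. -/
def spanCodes (r m n : ℕ) : List ℕ :=
  [0, r, m, n, m ^^^ r, n ^^^ r, n ^^^ m, n ^^^ (r ^^^ m)]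

/-- Codes `m` such that `0, r, m, m + r` are distinct and `1 + m`, `1 + m + r` are invertible. -/
def compatible (r : ℕ) : List ℕ :=
  (List.range 512).filter fun m =>
    okMask.testBit m && okMask.testBit (m ^^^ r) && m != 0 && m != r

set_option maxRecDepth 100000 in
lemma cases3_complete : ∀ r ∈ compCodes, ∀ m ∈ compatible r, ∀ n ∈ compatible r,
    okMask.testBit (n ^^^ m) = true → okMask.testBit (n ^^^ (r ^^^ m)) = true →
    n ≠ m → n ≠ r ^^^ m →
    ∃ e ∈ cases3 r, m ∈ spanCodes r e.2.1 e.2.2.1 ∧ n ∈ spanCodes r e.2.1 e.2.2.1 := by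
  decide +kernel

set_option maxRecDepth 100000 in
set_option synthInstance.maxSize 4096 in
set_option synthInstance.maxHeartbeats 400000 in
lemma cases3_sound : ∀ r ∈ compCodes, ∀ e ∈ cases3 r,
    (dec e.2.2.2.1).det = 1 ∧ (dec e.2.2.2.2).det = 1 ∧
    (∃ a b c, dec e.2.2.2.1 * dec e.2.2.2.2 = 1 + par e.1 a b c) ∧
    ∀ x ∈ [r, e.2.1, e.2.2.1], ∃ a b c,
      dec e.2.2.2.1 * dec x * dec e.2.2.2.2 = par e.1 a b c := by
  simp only [Matrix.det_fin_three]
  decide +kernel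

/-! ### The five spaces -/

lemma mem_tspace (t : Fin 5) (M : Mat) : M ∈ tspace t ↔ ∃ a b c, M = par t a b c := by
  fin_cases t
  · constructor
    · intro h
      refine ⟨M 0 1, M 0 2, M 1 2, ?_⟩
      ext i j
      fin_cases i <;> fin_cases j <;> first | rfl | exact h _ _ (by decide)
    · rintro ⟨a, b, c, rfl⟩
      have h0 : ∀ (a b c : ZMod 2) (i j : Fin 3), j ≤ i → par 0 a b c i j = 0 := by
        intro a b c i j h
        fin_cases i <;> fin_cases j <;> first | rfl | exact absurd h (by decide)
      exact h0 a b c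
  all_goals exact Iff.rfl

lemma finrank_tspace (t : Fin 5) : Module.finrank (ZMod 2) (tspace t) = 3 := by
  have hinj : ∀ (t : Fin 5) (a b c a' b' c' : ZMod 2),
      par t a b c = par t a' b' c' → a = a' ∧ b = b' ∧ c = c' := by decide +kernel
  have hb : Function.Bijective (fun p : ZMod 2 × ZMod 2 × ZMod 2 =>
      (⟨par t p.1 p.2.1 p.2.2, (mem_tspace t _).2 ⟨_, _, _, rfl⟩⟩ : tspace t)) := by
    constructor
    · rintro ⟨a, b, c⟩ ⟨a', b', c'⟩ h
      obtain ⟨rfl, rfl, rfl⟩ := hinj t _ _ _ _ _ _ (congrArg Subtype.val h)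
      rfl
    · rintro ⟨M, hM⟩
      obtain ⟨a, b, c, rfl⟩ := (mem_tspace t M).1 hM
      exact ⟨(a, b, c), rfl⟩
  have hc := Nat.card_eq_of_bijective _ hb
  rw [Module.natCard_eq_pow_finrank (K := ZMod 2) (V := tspace t)] at hc
  have h2 : (2 : ℕ) ^ 3 = 2 ^ Module.finrank (ZMod 2) (tspace t) := by
    rw [Nat.card_zmod] at hc
    rw [← hc]
    simp
  exact (Nat.pow_right_injective le_rfl h2).symm

lemma isUnit_one_add_par (t : Fin 5) (a b c : ZMod 2) : IsUnit (1 + par t a b c) := by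
  rw [isUnit_iff_det, Matrix.det_fin_three]
  revert t a b c
  decide +kernel

lemma mem_transList (H : Submodule (ZMod 2) Mat) : H ∈ transList ↔ ∃ t, H = tspace t := by
  simp [transList, Fin.exists_fin_succ, tspace]

/-! ### Invariants of equivalence -/

/-- The translation space has a common nonzero vector in its kernels. -/
def RKer (S : Set Mat) : Prop :=
  ∃ v : Fin 3 → ZMod 2, v ≠ 0 ∧ ∀ M ∈ S, ∀ N ∈ S, (M - N) *ᵥ v = 0

/-- The translation space has a common nonzero vector in its left kernels. -/
def LKer (S : Set Mat) : Prop :=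
  ∃ v : Fin 3 → ZMod 2, v ≠ 0 ∧ ∀ M ∈ S, ∀ N ∈ S, v ᵥ* (M - N) = 0

/-- The translation space contains a matrix of rank one. -/
def HasRankOne (S : Set Mat) : Prop :=
  ∃ M ∈ S, ∃ N ∈ S, ∃ u v : Fin 3 → ZMod 2, u ≠ 0 ∧ v ≠ 0 ∧ M - N = vecMulVec u v

lemma mulVec_ne_zero {P : Mat} (hP : IsUnit P) {v : Fin 3 → ZMod 2} (hv : v ≠ 0) :
    P *ᵥ v ≠ 0 := by
  intro h
  exact hv (Matrix.mulVec_injective_of_isUnit hP (by simpa using h))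

lemma vecMul_ne_zero {P : Mat} (hP : IsUnit P) {v : Fin 3 → ZMod 2} (hv : v ≠ 0) :
    v ᵥ* P ≠ 0 := by
  intro h
  exact hv (Matrix.vecMul_injective_of_isUnit hP (by simpa using h))

lemma AffEquiv.symm' {S T : Set Mat} (h : AffEquiv S T) : AffEquiv T S := by
  obtain ⟨P, Q, ⟨p, rfl⟩, ⟨q, rfl⟩, rfl⟩ := h
  refine ⟨↑p⁻¹, ↑q⁻¹, p⁻¹.isUnit, q⁻¹.isUnit, ?_⟩
  rw [Set.image_image]
  have : ∀ M : Mat, (↑p⁻¹ : Mat) * ((p : Mat) * M * (q : Mat)) * (↑q⁻¹ : Mat) = M := by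
    intro M; simp [mul_assoc]
  simp only [this, Set.image_id']

lemma AffEquiv.trans' {S T U : Set Mat} (h : AffEquiv S T) (h' : AffEquiv T U) :
    AffEquiv S U := by
  obtain ⟨P, Q, hP, hQ, rfl⟩ := h
  obtain ⟨P', Q', hP', hQ', rfl⟩ := h'
  refine ⟨P' * P, Q * Q', hP'.mul hP, hQ.mul hQ', ?_⟩
  rw [Set.image_image]
  simp only [mul_assoc]

lemma AffEquiv.rKer {S T : Set Mat} (h : AffEquiv S T) : RKer S ↔ RKer T := by
  have key : ∀ {S T : Set Mat}, AffEquiv S T → RKer T → RKer S := by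
    rintro S _ ⟨P, Q, hP, hQ, rfl⟩ ⟨v, hv, h⟩
    refine ⟨Q *ᵥ v, mulVec_ne_zero hQ hv, fun M hM N hN => ?_⟩
    have := h _ ⟨M, hM, rfl⟩ _ ⟨N, hN, rfl⟩
    by_contra hne
    apply mulVec_ne_zero hP hne
    rw [← this]
    simp only [Matrix.mulVec_mulVec, ← mul_sub, ← sub_mul, mul_assoc]
  exact ⟨key h.symm', key h⟩

lemma AffEquiv.lKer {S T : Set Mat} (h : AffEquiv S T) : LKer S ↔ LKer T := by
  have key : ∀ {S T : Set Mat}, AffEquiv S T → LKer T → LKer S := by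
    rintro S _ ⟨P, Q, hP, hQ, rfl⟩ ⟨v, hv, h⟩
    refine ⟨v ᵥ* P, vecMul_ne_zero hP hv, fun M hM N hN => ?_⟩
    have := h _ ⟨M, hM, rfl⟩ _ ⟨N, hN, rfl⟩
    by_contra hne
    apply vecMul_ne_zero hQ hne
    rw [← this]
    simp only [Matrix.vecMul_vecMul, ← mul_sub, ← sub_mul, mul_assoc]
  exact ⟨key h.symm', key h⟩

lemma AffEquiv.hasRankOne {S T : Set Mat} (h : AffEquiv S T) :
    HasRankOne S ↔ HasRankOne T := by
  have key : ∀ {S T : Set Mat}, AffEquiv S T → HasRankOne S → HasRankOne T := by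
    rintro S _ ⟨P, Q, hP, hQ, rfl⟩ ⟨M, hM, N, hN, u, v, hu, hv, h⟩
    refine ⟨_, ⟨M, hM, rfl⟩, _, ⟨N, hN, rfl⟩, P *ᵥ u, v ᵥ* Q, mulVec_ne_zero hP hu,
      vecMul_ne_zero hQ hv, ?_⟩
    simp only [← mul_sub, ← sub_mul, h, Matrix.mul_vecMulVec, Matrix.vecMulVec_mul]
  exact ⟨key h, key h.symm'⟩

lemma mem_affOf (t : Fin 5) (M : Mat) : M ∈ affOf (tspace t) ↔ ∃ a b c, M = 1 + par t a b c := by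
  simp only [affOf, Set.mem_image, SetLike.mem_coe, mem_tspace]
  constructor
  · rintro ⟨_, ⟨a, b, c, rfl⟩, rfl⟩
    exact ⟨a, b, c, rfl⟩
  · rintro ⟨a, b, c, rfl⟩
    exact ⟨_, ⟨a, b, c, rfl⟩, rfl⟩

lemma par_sub (t : Fin 5) (a b c a' b' c' : ZMod 2) :
    par t a b c - par t a' b' c' = par t (a - a') (b - b') (c - c') := by
  revert t a b c a' b' c'
  decide +kernel

lemma rKer_affOf (t : Fin 5) : RKer (affOf (tspace t)) ↔ t = 0 ∨ t = 2 := by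
  have h1 : RKer (affOf (tspace t)) ↔
      ∃ v : Fin 3 → ZMod 2, v ≠ 0 ∧ ∀ a b c, par t a b c *ᵥ v = 0 := by
    simp only [RKer, mem_affOf]
    refine exists_congr fun v => and_congr_right fun _ => ⟨fun h a b c => ?_, ?_⟩
    · simpa [par_sub] using h _ ⟨a, b, c, rfl⟩ _ ⟨0, 0, 0, rfl⟩
    · rintro h _ ⟨a, b, c, rfl⟩ _ ⟨a', b', c', rfl⟩
      rw [add_sub_add_left_eq_sub, par_sub, h]
  rw [h1]
  clear h1
  revert t
  decide +kernel

lemma lKer_affOf (t : Fin 5) : LKer (affOf (tspace t)) ↔ t = 0 ∨ t = 1 := by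
  have h1 : LKer (affOf (tspace t)) ↔
      ∃ v : Fin 3 → ZMod 2, v ≠ 0 ∧ ∀ a b c, v ᵥ* par t a b c = 0 := by
    simp only [LKer, mem_affOf]
    refine exists_congr fun v => and_congr_right fun _ => ⟨fun h a b c => ?_, ?_⟩
    · simpa [par_sub] using h _ ⟨a, b, c, rfl⟩ _ ⟨0, 0, 0, rfl⟩
    · rintro h _ ⟨a, b, c, rfl⟩ _ ⟨a', b', c', rfl⟩
      rw [add_sub_add_left_eq_sub, par_sub, h]
  rw [h1]
  clear h1
  revert t
  decide +kernel

lemma hasRankOne_affOf (t : Fin 5) : HasRankOne (affOf (tspace t)) ↔ t ≠ 3 := by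
  have h1 : HasRankOne (affOf (tspace t)) ↔
      ∃ a b c, ∃ u v : Fin 3 → ZMod 2, u ≠ 0 ∧ v ≠ 0 ∧ par t a b c = vecMulVec u v := by
    simp only [HasRankOne, mem_affOf]
    constructor
    · rintro ⟨_, ⟨a, b, c, rfl⟩, _, ⟨a', b', c', rfl⟩, u, v, hu, hv, h⟩
      rw [add_sub_add_left_eq_sub, par_sub] at h
      exact ⟨_, _, _, u, v, hu, hv, h⟩
    · rintro ⟨a, b, c, u, v, hu, hv, h⟩
      refine ⟨_, ⟨a, b, c, rfl⟩, _, ⟨0, 0, 0, rfl⟩, u, v, hu, hv, ?_⟩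
      rw [add_sub_add_left_eq_sub, par_sub, ← h]
      simp
  rw [h1]
  clear h1
  revert t
  decide +kernel

lemma affEquiv_tspace {s t : Fin 5} (h : AffEquiv (affOf (tspace s)) (affOf (tspace t))) :
    s = t := by
  have h1 := h.rKer
  have h2 := h.lKer
  have h3 := h.hasRankOne
  rw [rKer_affOf, rKer_affOf] at h1
  rw [lKer_affOf, lKer_affOf] at h2
  rw [hasRankOne_affOf, hasRankOne_affOf] at h3
  clear h
  revert s t
  decide

/-! ### Reduction to the finite enumeration -/

/-- A nonzero element `dec r` of `H` extends to a basis `dec r, dec m, dec n`. Linear independence is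
recorded by the inequalities between codes that the enumerations use. -/
lemma exists_codes {H : Submodule (ZMod 2) Mat} (hH : Module.finrank (ZMod 2) H = 3) {r : ℕ}
    (hr : dec r ∈ H) (hr0 : dec r ≠ 0) :
    ∃ m < 512, ∃ n < 512, dec m ∈ H ∧ dec n ∈ H ∧ m ≠ 0 ∧ m ≠ r ∧ n ≠ 0 ∧ n ≠ r ∧ n ≠ m ∧
      n ≠ r ^^^ m ∧ H = Submodule.span (ZMod 2) {dec r, dec m, dec n} := by
  have hfin : ∀ s : Finset Mat, s.card < 3 →
      ∃ M ∈ H, M ∉ Submodule.span (ZMod 2) (s : Set Mat) := by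
    intro s hs
    by_contra! hall
    have h1 := Submodule.finrank_mono (show H ≤ Submodule.span (ZMod 2) (s : Set Mat) from hall)
    have h2 := finrank_span_finset_le_card (R := ZMod 2) s
    unfold Set.finrank at h2
    omega
  obtain ⟨M, hM, hMs⟩ := hfin {dec r} (by simp)
  obtain ⟨N, hN, hNs⟩ := hfin {dec r, M} (lt_of_le_of_lt Finset.card_le_two (by norm_num))
  obtain ⟨m, hm, rfl⟩ := exists_dec M
  obtain ⟨n, hn, rfl⟩ := exists_dec N
  simp only [Finset.coe_singleton, Finset.coe_insert] at hMs hNs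
  refine ⟨m, hm, n, hn, hM, hN, ?_, ?_, ?_, ?_, ?_, ?_, ?_⟩
  · rintro rfl; exact hMs (by rw [dec_zero]; exact zero_mem _)
  · rintro rfl; exact hMs (Submodule.mem_span_singleton_self _)
  · rintro rfl; exact hNs (by rw [dec_zero]; exact zero_mem _)
  · rintro rfl; exact hNs (Submodule.subset_span (by simp))
  · rintro rfl; exact hNs (Submodule.subset_span (by simp))
  · rintro rfl
    rw [dec_xor] at hNs
    exact hNs (add_mem (Submodule.subset_span (by simp)) (Submodule.subset_span (by simp)))
  · symm
    apply Submodule.eq_of_le_of_finrank_le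
    · rw [Submodule.span_le]
      rintro _ (rfl | rfl | rfl) <;> assumption
    · have hli : LinearIndependent (ZMod 2) ![dec n, dec m, dec r] := by
        refine linearIndependent_finCons.2 ⟨linearIndependent_finCons.2 ⟨?_, ?_⟩, ?_⟩
        · exact LinearIndependent.of_subsingleton 0 (by simpa using hr0)
        · simpa using hMs
        · simpa [Set.pair_comm] using hNs
      have := finrank_span_eq_card hli
      have hset : Set.range ![dec n, dec m, dec r] = {dec r, dec m, dec n} := by
        ext x
        simp
      rw [hset] at this
      exact (hH.trans this.symm).le

/-- Two cosets of `1` are equivalent as soon as one is carried into the other, because the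
translation spaces have the same dimension. -/
lemma affEquiv_of_le {H T : Submodule (ZMod 2) Mat} (hHT : Module.finrank (ZMod 2) H =
    Module.finrank (ZMod 2) T) {P Q : Mat} (hP : IsUnit P) (hQ : IsUnit Q)
    (h1 : ∃ X ∈ T, P * Q = 1 + X) (hle : ∀ M ∈ H, P * M * Q ∈ T) :
    AffEquiv (affOf H) (affOf T) := by
  obtain ⟨X, hX, hPQ⟩ := h1
  let f : Mat →ₗ[ZMod 2] Mat := LinearMap.mulRight (ZMod 2) Q ∘ₗ LinearMap.mulLeft (ZMod 2) P
  have hf : ∀ M, f M = P * M * Q := fun _ => rfl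
  have hinj : Function.Injective f := by
    intro M N h
    rw [hf, hf] at h
    exact hP.mul_left_cancel (hQ.mul_right_cancel h)
  have hmap : H.map f = T := by
    apply Submodule.eq_of_le_of_finrank_eq
    · rintro _ ⟨M, hM, rfl⟩
      exact hle M hM
    · exact (Submodule.equivMapOfInjective f hinj H).symm.finrank_eq.trans hHT
  refine ⟨P, Q, hP, hQ, ?_⟩
  ext Y
  simp only [affOf, Set.mem_image, SetLike.mem_coe, exists_exists_and_eq_and]
  have hexp : ∀ M, P * (1 + M) * Q = 1 + (X + f M) := by
    intro M
    rw [hf, mul_add, add_mul, mul_one, hPQ, add_assoc]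
  simp only [hexp]
  constructor
  · rintro ⟨Z, hZ, rfl⟩
    have : Z - X ∈ H.map f := hmap ▸ sub_mem hZ hX
    obtain ⟨M, hM, hMZ⟩ := this
    exact ⟨M, hM, by rw [hMZ]; simp⟩
  · rintro ⟨M, hM, rfl⟩
    exact ⟨_, add_mem hX (hle M hM), rfl⟩

/-- Conjugating the translation space does not change the equivalence class of its coset of `1`. -/
lemma affEquiv_conj (H : Submodule (ZMod 2) Mat) {P Q : Mat} (hPQ : P * Q = 1) :
    ∃ H' : Submodule (ZMod 2) Mat, Module.finrank (ZMod 2) H' = Module.finrank (ZMod 2) H ∧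
      (∀ M, M ∈ H' ↔ ∃ N ∈ H, P * N * Q = M) ∧ AffEquiv (affOf H) (affOf H') := by
  have hQP : Q * P = 1 := mul_eq_one_comm.1 hPQ
  have hP : IsUnit P := ⟨⟨P, Q, hPQ, hQP⟩, rfl⟩
  have hQ : IsUnit Q := ⟨⟨Q, P, hQP, hPQ⟩, rfl⟩
  let f : Mat →ₗ[ZMod 2] Mat := LinearMap.mulRight (ZMod 2) Q ∘ₗ LinearMap.mulLeft (ZMod 2) P
  have hinj : Function.Injective f := by
    intro M N h
    exact hP.mul_left_cancel (hQ.mul_right_cancel h)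
  have hrank := (Submodule.equivMapOfInjective f hinj H).symm.finrank_eq
  refine ⟨H.map f, hrank, fun M => Iff.rfl, ?_⟩
  exact affEquiv_of_le hrank.symm hP hQ ⟨0, zero_mem _, by rw [hPQ, add_zero]⟩
    fun M hM => ⟨M, hM, rfl⟩

lemma testBit_of_isUnit {n : ℕ} (hn : n < 512) (h : IsUnit (1 + dec n)) :
    okMask.testBit n = true :=
  okMask_spec n hn ((isUnit_iff_det _).1 h)

lemma xor_lt_512 {m n : ℕ} (hm : m < 512) (hn : n < 512) : m ^^^ n < 512 :=
  Nat.xor_lt_two_pow (n := 9) hm hn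

lemma compCodes_spec : ∀ r ∈ compCodes, r < 512 ∧ r ≠ 0 := by decide

lemma dec_ne_zero {n : ℕ} (hn : n < 512) (h0 : n ≠ 0) : dec n ≠ 0 := fun h =>
  h0 (dec_inj hn (by norm_num) (h.trans dec_zero.symm))

lemma dec_mem_of_spanCodes {K : Submodule (ZMod 2) Mat} {r m n : ℕ} (hr : dec r ∈ K)
    (hm : dec m ∈ K) (hn : dec n ∈ K) : ∀ x ∈ spanCodes r m n, dec x ∈ K := by
  intro x hx
  have hxor : ∀ {a b : ℕ}, dec a ∈ K → dec b ∈ K → dec (a ^^^ b) ∈ K := fun ha hb => by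
    rw [dec_xor]; exact add_mem ha hb
  simp only [spanCodes, List.mem_cons, List.not_mem_nil, or_false] at hx
  rcases hx with rfl | rfl | rfl | rfl | rfl | rfl | rfl | rfl
  exacts [by rw [dec_zero]; exact zero_mem _, hr, hm, hn, hxor hm hr, hxor hn hr, hxor hn hm,
    hxor hn (hxor hr hm)]

/-- A space with `1 + H ⊆ GL₃(F2)` that contains a companion matrix occurs in the table `cases3`. -/
lemma classify_of_companion {H : Submodule (ZMod 2) Mat} (hH : Module.finrank (ZMod 2) H = 3)
    (hu : ∀ M ∈ H, IsUnit (1 + M)) {r : ℕ} (hr : r ∈ compCodes) (hrH : dec r ∈ H) :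
    ∃ t, AffEquiv (affOf H) (affOf (tspace t)) := by
  obtain ⟨hr512, hr0⟩ := compCodes_spec r hr
  obtain ⟨m, hm, n, hn, hmH, hnH, hm0, hmr, hn0, hnr, hnm, hnrm, hspan⟩ :=
    exists_codes hH hrH (dec_ne_zero hr512 hr0)
  have hok : ∀ k < 512, dec k ∈ H → okMask.testBit k = true := fun k hk hkH =>
    testBit_of_isUnit hk (hu _ hkH)
  have hxor : ∀ {a b : ℕ}, dec a ∈ H → dec b ∈ H → dec (a ^^^ b) ∈ H := fun ha hb => by
    rw [dec_xor]; exact add_mem ha hb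
  have hcompat : ∀ k < 512, dec k ∈ H → k ≠ 0 → k ≠ r → k ∈ compatible r := by
    intro k hk hkH hk0 hkr
    simp only [compatible, List.mem_filter, List.mem_range, Bool.and_eq_true, bne_iff_ne]
    exact ⟨hk, ⟨⟨hok k hk hkH, hok _ (xor_lt_512 hk hr512) (hxor hkH hrH)⟩, hk0⟩, hkr⟩
  obtain ⟨e, he, hme, hne⟩ := cases3_complete r hr m (hcompat m hm hmH hm0 hmr)
    n (hcompat n hn hnH hn0 hnr) (hok _ (xor_lt_512 hn hm) (hxor hnH hmH))
    (hok _ (xor_lt_512 hn (xor_lt_512 hr512 hm)) (hxor hnH (hxor hrH hmH))) hnm hnrm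
  obtain ⟨hP, hQ, ⟨a, b, c, hPQ⟩, hgen⟩ := cases3_sound r hr e he
  refine ⟨e.1, ?_⟩
  let f : Mat →ₗ[ZMod 2] Mat := LinearMap.mulRight (ZMod 2) (dec e.2.2.2.2) ∘ₗ
    LinearMap.mulLeft (ZMod 2) (dec e.2.2.2.1)
  -- The matrices that the map of the table entry sends into the target space.
  let K : Submodule (ZMod 2) Mat := (tspace e.1).comap f
  have hK : ∀ x ∈ [r, e.2.1, e.2.2.1], dec x ∈ K := fun x hx => (mem_tspace _ _).2 (hgen x hx)
  have hKr : dec r ∈ K := hK _ (by simp)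
  have hK1 : dec e.2.1 ∈ K := hK _ (by simp)
  have hK2 : dec e.2.2.1 ∈ K := hK _ (by simp)
  have hKspan := dec_mem_of_spanCodes hKr hK1 hK2
  refine affEquiv_of_le (hH.trans (finrank_tspace _).symm) ((isUnit_iff_det _).2 hP)
    ((isUnit_iff_det _).2 hQ) ⟨_, (mem_tspace _ _).2 ⟨a, b, c, rfl⟩, hPQ⟩ ?_
  have hHK : H ≤ K := by
    rw [hspan, Submodule.span_le]
    rintro _ (rfl | rfl | rfl)
    exacts [hKr, hKspan _ hme, hKspan _ hne]
  exact hHK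

/-- A space of dimension `3` cannot consist of square-zero matrices. -/
lemma exists_not_nil {H : Submodule (ZMod 2) Mat} (hH : Module.finrank (ZMod 2) H = 3) :
    ∃ n < 512, dec n ∈ H ∧ n ∉ nilCodes := by
  by_contra! hall
  have hxor : ∀ {a b : ℕ}, dec a ∈ H → dec b ∈ H → dec (a ^^^ b) ∈ H := fun ha hb => by
    rw [dec_xor]; exact add_mem ha hb
  have hbot : H ≠ ⊥ := by rintro rfl; simp at hH
  obtain ⟨R, hR, hR0⟩ := H.exists_mem_ne_zero_of_ne_bot hbot
  obtain ⟨r, hr, rfl⟩ := exists_dec R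
  have hr0 : r ≠ 0 := by rintro rfl; exact hR0 dec_zero
  obtain ⟨m, hm, n, hn, hmH, hnH, hm0, hmr, hn0, hnr, hnm, hnrm, -⟩ := exists_codes hH hR hR0
  have := nil_dependent r (hall r hr hR) m (hall m hm hmH)
    (hall _ (xor_lt_512 hr hm) (hxor hR hmH)) n (hall n hn hnH)
    (hall _ (xor_lt_512 hn hr) (hxor hnH hR)) (hall _ (xor_lt_512 hn hm) (hxor hnH hmH))
    (hall _ (xor_lt_512 hn (xor_lt_512 hr hm)) (hxor hnH (hxor hR hmH)))
  tauto

/-- A matrix of `H` that is not square-zero is cyclic, and conjugation by its Krylov matrix puts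
its companion matrix into the space. -/
lemma classify_linear {H : Submodule (ZMod 2) Mat} (hH : Module.finrank (ZMod 2) H = 3)
    (hu : ∀ M ∈ H, IsUnit (1 + M)) : ∃ t, AffEquiv (affOf H) (affOf (tspace t)) := by
  obtain ⟨n, hn, hnH, hnil⟩ := exists_not_nil hH
  obtain ⟨v, hdet, r, hr, hK⟩ :=
    (nil_or_cyclic n hn (testBit_of_isUnit hn (hu _ hnH))).resolve_left hnil
  obtain ⟨⟨K, L, hKL, hLK⟩, hKeq⟩ := (isUnit_iff_det _).2 hdet
  simp only at hKeq
  rw [← hKeq] at hK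
  obtain ⟨H', hrank, hmem, heq⟩ := affEquiv_conj H hLK
  have hu' : ∀ M ∈ H', IsUnit (1 + M) := by
    intro M hM
    obtain ⟨N, hN, rfl⟩ := (hmem M).1 hM
    have : 1 + L * N * K = L * (1 + N) * K := by rw [mul_add, add_mul, mul_one, hLK]
    rw [this]
    exact (IsUnit.mul ⟨⟨L, K, hLK, hKL⟩, rfl⟩ (hu N hN)).mul ⟨⟨K, L, hKL, hLK⟩, rfl⟩
  have hrH' : dec r ∈ H' := (hmem _).2 ⟨dec n, hnH, by
    rw [mul_assoc, hK, ← mul_assoc, hLK, one_mul]⟩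
  obtain ⟨t, ht⟩ := classify_of_companion (hrank.trans hH) hu' hr hrH'
  exact ⟨t, heq.trans' ht⟩

lemma classify {S : Set Mat} (hS : IsAffine3 S) (hu : ∀ M ∈ S, IsUnit M) :
    ∃ t, AffEquiv S (affOf (tspace t)) := by
  obtain ⟨A, H, hH, rfl⟩ := hS
  obtain ⟨⟨A, B, hAB, hBA⟩, rfl⟩ : IsUnit A := hu A ⟨0, H.zero_mem, by simp⟩
  simp only at hu ⊢
  have hBu : IsUnit B := ⟨⟨B, A, hBA, hAB⟩, rfl⟩
  let f : Mat →ₗ[ZMod 2] Mat := LinearMap.mulLeft (ZMod 2) B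
  have hinj : Function.Injective f := fun M N h => hBu.mul_left_cancel h
  have hrank := (Submodule.equivMapOfInjective f hinj H).symm.finrank_eq
  have hexp : ∀ M, B * (A + M) = 1 + f M := fun M => by
    rw [mul_add, hBA]; rfl
  have heq : AffEquiv ((fun M => A + M) '' (H : Set Mat)) (affOf (H.map f)) := by
    refine ⟨B, 1, hBu, isUnit_one, ?_⟩
    simp only [affOf, Submodule.map_coe, Set.image_image, mul_one, hexp]
  obtain ⟨t, ht⟩ := classify_linear (hrank.trans hH) (by
    rintro _ ⟨M, hM, rfl⟩
    rw [← hexp]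
    exact hBu.mul (hu _ ⟨M, hM, rfl⟩))
  exact ⟨t, heq.trans' ht⟩

theorem classification_of_affine_subspaces_of_invertible_matrices :
    (∀ H ∈ transList, Module.finrank (ZMod 2) H = 3 ∧ ∀ M ∈ affOf H, IsUnit M) ∧
    (transList.map affOf).Pairwise (fun S T => ¬ AffEquiv S T) ∧
    ∀ S : Set (Matrix (Fin 3) (Fin 3) (ZMod 2)), IsAffine3 S → (∀ M ∈ S, IsUnit M) →
      ∃ H ∈ transList, AffEquiv S (affOf H) := by
  refine ⟨?_, ?_, ?_⟩
  · intro H hH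
    obtain ⟨t, rfl⟩ := (mem_transList H).1 hH
    refine ⟨finrank_tspace t, fun M hM => ?_⟩
    obtain ⟨a, b, c, rfl⟩ := (mem_affOf t M).1 hM
    exact isUnit_one_add_par t a b c
  · have hlist : transList.map affOf = (List.finRange 5).map fun t => affOf (tspace t) := rfl
    rw [hlist, List.pairwise_map]
    exact (List.nodup_finRange 5).imp fun hne h => hne (affEquiv_tspace h)
  · intro S hS hu
    obtain ⟨t, ht⟩ := classify hS hu
    exact ⟨tspace t, (mem_transList _).2 ⟨t, rfl⟩, ht⟩
end
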